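/- Let γ > 0, 1 < α < 2, p > 1, a > 0, b > 0, and let f be locally integrable on [0,∞). Suppose w ∈ C¹([0,∞)), w ≢ 0, the function t ↦ ₀I_t^{2−α}(w(s) − w'(0)s − w(0)) is in AC²([0,T]) for every T > 0, and for almost every t ≥ 0 one has (₀D_t^α w)(t) + a·w(t) = (₀I_t^γ f)(t) and f(t) ≥ b·|w(t)|^p. Assume 0 < γ < α/2, and let β be any number satisfying α/2 ≤ γ + β < 1 and 0 < β < α. If either α + γ > 2, or (α + γ ≤ 2 and w'(0) = 0), then liminf_{t→+∞} t^{1−γ−β}·(₀I_t^β w)(t) > 0. -/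

import Mathlib

/-!
Write `k_μ(t) = t^{μ-1}/Γ(μ)`, let `*` be the one-sided convolution, and let
`e_ν = ∑ (-a)ⁿ k_{αn+ν}` be the Mittag-Leffler kernels, so that `e_ν + a e_{ν+α} = k_ν` and
`e_ν * k_κ = e_{ν+κ}`. Put `δ = γ + β`.

Integrating the equation `α` times gives
`w + a k_α * w = w(0) k_1 + w'(0) k_2 + k_{α+γ} * f` almost everywhere; differentiability of `w` at
`0` ensures that `k_{2-α} * (w - w'(0)s - w(0))` has zero derivative at the origin. Convolving with
`e_β` yields `k_β * w = w(0) e_{β+1} + w'(0) e_{β+2} + e_{α+δ} * f`.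

Three facts about the kernels finish the proof.

* Positivity: `e_{α+δ} ≥ 0` because `δ ≥ α/2`. It suffices to treat `e_{3α/2}`, whose Laplace
  transform is `1/(z(z²+a))` with `z = s^{α/2}`. This is a mixture of the functions
  `exp(-x s^{α/2})` with the nonnegative weight `(1 - cos(√a x))/a`, and each of these is completely
  monotone because `α/2 < 1`. Complete monotonicity along `S, S+1, S+2, …` alone already makes the
  function itself nonnegative, by a Hausdorff moment argument.
* Decay: `e_ν(t) = O(1/t)` for `0 < ν ≤ α`. The Laplace transform of `t e_ν(t)` extends to the right
  half-plane, since `s^α + a` has no zeros there when `α < 2`, and is bounded on vertical lines by a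
  fixed integrable function; the inversion line is moved to the imaginary axis.
* Growth: consequently `e_{α+δ} = (k_δ - e_δ)/a` is at least `c t^{δ-1}` for large `t`, while
  `e_ν = o(t^{δ-1})` whenever `ν < α + δ`.

Since `f ≥ b|w|^p` is nonnegative and not almost everywhere zero, `e_{α+δ} * f` is bounded below by
a positive multiple of `t^{δ-1}`. The term `w(0) e_{β+1}` is `o(t^{δ-1})` as `α + γ > 1`, and
`w'(0) e_{β+2}` is `o(t^{δ-1})` if `α + γ > 2` and absent if `w'(0) = 0`.
-/

open MeasureTheory Filter

/-- Riemann–Liouville fractional integral of order `σ` based at `0`: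
`(₀I_t^σ f)(t) = (1/Γ(σ)) ∫₀ᵗ (t−s)^{σ−1} f(s) ds`. -/
noncomputable def rlInt (σ : ℝ) (f : ℝ → ℝ) (t : ℝ) : ℝ :=
  (1 / Real.Gamma σ) * ∫ s in (0:ℝ)..t, (t - s) ^ (σ - 1) * f s

/-- The function whose second derivative is the (left) Caputo derivative of order `α ∈ (1,2]`:
for `α < 2` it is `₀I_t^{2−α}(w(s) − w'(0)·s − w(0))`, and for `α = 2` it is `w` itself. -/
noncomputable def capKernel (α : ℝ) (w : ℝ → ℝ) : ℝ → ℝ :=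
  if α = 2 then w else rlInt (2 - α) (fun s => w s - deriv w 0 * s - w 0)

/-- Left Caputo fractional derivative of order `α ∈ (1,2]`:
`(₀D_t^α w)(t) = (d²/dt²)[ ₀I_t^{2−α}(w(s) − w'(0)s − w(0)) ](t)` (second derivative of `w` when `α = 2`). -/
noncomputable def caputoD (α : ℝ) (w : ℝ → ℝ) : ℝ → ℝ :=
  deriv (deriv (capKernel α w))

/-- `g ∈ AC²([0,T])`: `g` is differentiable on `[0,T]`, its second derivative is integrable,
and `g'` is the integral of `g''` (i.e. `g'` is absolutely continuous). -/
def AC2On (g : ℝ → ℝ) (T : ℝ) : Prop :=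
  (∀ t ∈ Set.Icc (0:ℝ) T, DifferentiableAt ℝ g t) ∧
  IntervalIntegrable (deriv (deriv g)) volume 0 T ∧
  ∀ t ∈ Set.Icc (0:ℝ) T, deriv g t = deriv g 0 + ∫ s in (0:ℝ)..t, deriv (deriv g) s

namespace FractionalODE

open Set Topology

/-! ### Power kernels and one-sided convolution -/

/-- The power kernel `k_μ(t) = t^{μ-1} / Γ(μ)` of the fractional integral of order `μ`. -/
noncomputable def powerKernel (μ t : ℝ) : ℝ := t ^ (μ - 1) / Real.Gamma μ

/-- The one-sided convolution `(A * B)(t) = ∫₀ᵗ A(t-s) B(s) ds` of functions on `(0,∞)`. -/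
noncomputable def causalConv (A B : ℝ → ℝ) (t : ℝ) : ℝ := ∫ s in (0 : ℝ)..t, A (t - s) * B s

/-- Absolute convergence of the integral defining `causalConv A B t`, without which the value is
the junk value `0`. -/
def CausalConvExists (A B : ℝ → ℝ) (t : ℝ) : Prop :=
  IntervalIntegrable (fun s => A (t - s) * B s) volume 0 t

section PowerKernel

variable {μ t : ℝ}

lemma powerKernel_nonneg (hμ : 0 < μ) (ht : 0 ≤ t) : 0 ≤ powerKernel μ t :=
  div_nonneg (Real.rpow_nonneg ht _) (Real.Gamma_pos_of_pos hμ).le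

lemma powerKernel_pos (hμ : 0 < μ) (ht : 0 < t) : 0 < powerKernel μ t :=
  div_pos (Real.rpow_pos_of_pos ht _) (Real.Gamma_pos_of_pos hμ)

lemma powerKernel_one (t : ℝ) : powerKernel 1 t = 1 := by simp [powerKernel]

lemma powerKernel_two (t : ℝ) : powerKernel 2 t = t := by
  simp [powerKernel, show (2 : ℝ) - 1 = 1 by norm_num]

@[fun_prop]
lemma measurable_powerKernel (μ : ℝ) : Measurable (powerKernel μ) := by
  unfold powerKernel; fun_prop

lemma continuous_powerKernel (hμ : 1 ≤ μ) : Continuous (powerKernel μ) :=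
  (Real.continuous_rpow_const (by linarith)).div_const _

lemma continuousOn_powerKernel (μ : ℝ) : ContinuousOn (powerKernel μ) (Ioi 0) :=
  (continuousOn_id.rpow_const fun _ hx => Or.inl (ne_of_gt hx)).div_const _

lemma powerKernel_le_powerKernel {s : ℝ} (hμ : 1 ≤ μ) (hs : 0 ≤ s) (hst : s ≤ t) :
    powerKernel μ s ≤ powerKernel μ t := by
  have := Real.Gamma_pos_of_pos (zero_lt_one.trans_le hμ)
  unfold powerKernel
  gcongr

lemma mul_powerKernel (hμ : 0 < μ) (ht : 0 < t) :
    t * powerKernel μ t = μ * powerKernel (μ + 1) t := by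
  have ht1 : t ^ (μ + 1 - 1) = t * t ^ (μ - 1) := by
    rw [← Real.rpow_one_add' ht.le (by linarith)]; ring_nf
  have := (Real.Gamma_pos_of_pos hμ).ne'
  unfold powerKernel
  rw [ht1, Real.Gamma_add_one hμ.ne']
  field_simp

/-- The incomplete Gamma integral over `(y, ∞)` is a lower bound for `Γ(μ)`. -/
lemma rpow_mul_exp_neg_le_Gamma {y : ℝ} (hμ : 1 ≤ μ) (hy : 0 ≤ y) :
    y ^ (μ - 1) * Real.exp (-y) ≤ Real.Gamma μ := by
  have hμ0 : 0 < μ := zero_lt_one.trans_le hμ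
  have hΓ := Real.GammaIntegral_convergent hμ0
  rw [Real.Gamma_eq_integral hμ0]
  calc y ^ (μ - 1) * Real.exp (-y) = ∫ x in Ioi y, y ^ (μ - 1) * Real.exp (-x) := by
        rw [integral_const_mul, integral_exp_neg_Ioi]
    _ ≤ ∫ x in Ioi y, Real.exp (-x) * x ^ (μ - 1) := by
        refine setIntegral_mono_on ((integrableOn_exp_neg_Ioi y).const_mul _)
          (hΓ.mono_set (Ioi_subset_Ioi hy)) measurableSet_Ioi fun x hx => ?_
        rw [mul_comm]
        gcongr
        exact le_of_lt hx
    _ ≤ ∫ x in Ioi 0, Real.exp (-x) * x ^ (μ - 1) := by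
        refine setIntegral_mono_set hΓ ?_ (Ioi_subset_Ioi hy).eventuallyLE
        filter_upwards [ae_restrict_mem measurableSet_Ioi] with x hx
        exact mul_nonneg (Real.exp_pos _).le (Real.rpow_nonneg (le_of_lt hx) _)

lemma powerKernel_le_rpow_mul_exp {S : ℝ} (hμ : 1 ≤ μ) (hS : 0 < S) (ht : 0 ≤ t) :
    powerKernel μ t ≤ S ^ (1 - μ) * Real.exp (S * t) := by
  have hΓ := rpow_mul_exp_neg_le_Gamma hμ (mul_nonneg hS.le ht)
  rw [Real.exp_neg, ← div_eq_mul_inv, div_le_iff₀ (Real.exp_pos _), Real.mul_rpow hS.le ht] at hΓ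
  have hcancel : S ^ (1 - μ) * S ^ (μ - 1) = 1 := by rw [← Real.rpow_add hS]; simp
  rw [powerKernel, div_le_iff₀ (Real.Gamma_pos_of_pos (zero_lt_one.trans_le hμ))]
  calc t ^ (μ - 1) = S ^ (1 - μ) * (S ^ (μ - 1) * t ^ (μ - 1)) := by
        rw [← mul_assoc, hcancel, one_mul]
    _ ≤ S ^ (1 - μ) * (Real.Gamma μ * Real.exp (S * t)) := by gcongr
    _ = S ^ (1 - μ) * Real.exp (S * t) * Real.Gamma μ := by ring

end PowerKernel

section CausalConv

variable {A A' B B' C : ℝ → ℝ} {c t : ℝ}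

lemma rlInt_eq_causalConv (σ : ℝ) (f : ℝ → ℝ) (t : ℝ) :
    rlInt σ f t = causalConv (powerKernel σ) f t := by
  unfold rlInt causalConv powerKernel
  rw [← intervalIntegral.integral_const_mul]
  congr 1; ext s; ring

lemma causalConv_comm (A B : ℝ → ℝ) (t : ℝ) : causalConv A B t = causalConv B A t := by
  have h := intervalIntegral.integral_comp_sub_left (a := 0) (b := t)
    (fun s => B (t - s) * A s) t
  simp only [sub_sub_cancel, sub_self, sub_zero] at h
  rw [causalConv, causalConv, ← h]
  exact intervalIntegral.integral_congr fun s _ => mul_comm _ _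

lemma causalConv_eq_setIntegral (ht : 0 ≤ t) :
    causalConv A B t = ∫ s in Ioo 0 t, A (t - s) * B s := by
  rw [causalConv, intervalIntegral.integral_of_le ht, integral_Ioc_eq_integral_Ioo]

lemma causalConv_congr_left (ht : 0 ≤ t) (h : EqOn A A' (Ioo 0 t)) :
    causalConv A B t = causalConv A' B t := by
  rw [causalConv_eq_setIntegral ht, causalConv_eq_setIntegral ht]
  refine setIntegral_congr_fun measurableSet_Ioo fun s hs => ?_
  rw [h ⟨sub_pos.2 hs.2, sub_lt_self t hs.1⟩]

lemma causalConv_congr_right (ht : 0 ≤ t) (h : ∀ᵐ s, s ∈ Ioo 0 t → B s = B' s) :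
    causalConv A B t = causalConv A B' t := by
  rw [causalConv_eq_setIntegral ht, causalConv_eq_setIntegral ht]
  refine setIntegral_congr_ae measurableSet_Ioo ?_
  filter_upwards [h] with s hs hst
  rw [hs hst]

lemma causalConv_const_mul_right (c : ℝ) (A B : ℝ → ℝ) (t : ℝ) :
    causalConv A (fun s => c * B s) t = c * causalConv A B t := by
  simp only [causalConv, ← intervalIntegral.integral_const_mul, mul_left_comm]

lemma causalConv_add_right (h : CausalConvExists A B t) (h' : CausalConvExists A B' t) :
    causalConv A (fun s => B s + B' s) t = causalConv A B t + causalConv A B' t := by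
  simp only [causalConv, mul_add]
  exact intervalIntegral.integral_add h h'

lemma causalConv_sub_right (h : CausalConvExists A B t) (h' : CausalConvExists A B' t) :
    causalConv A (fun s => B s - B' s) t = causalConv A B t - causalConv A B' t := by
  simp only [causalConv, mul_sub]
  exact intervalIntegral.integral_sub h h'

lemma CausalConvExists.const_mul (h : CausalConvExists A B t) (c : ℝ) :
    CausalConvExists A (fun s => c * B s) t := by
  simpa only [CausalConvExists, mul_left_comm] using IntervalIntegrable.const_mul h c

lemma CausalConvExists.add (h : CausalConvExists A B t) (h' : CausalConvExists A B' t) :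
    CausalConvExists A (fun s => B s + B' s) t := by
  simpa only [CausalConvExists, mul_add] using IntervalIntegrable.add h h'

lemma CausalConvExists.symm (h : CausalConvExists A B t) : CausalConvExists B A t := by
  simpa [CausalConvExists, mul_comm] using (IntervalIntegrable.comp_sub_left h t).symm

lemma causalConvExists_of_continuousOn (hA : IntervalIntegrable A volume 0 t)
    (hB : ContinuousOn B (uIcc 0 t)) : CausalConvExists A B t := by
  have hA' : IntervalIntegrable (fun s => A (t - s)) volume 0 t := by
    simpa using (hA.comp_sub_left t).symm
  exact hA'.mul_continuousOn hB

lemma causalConvExists_of_bounded {M : ℝ} (ht : 0 ≤ t) (hA : IntervalIntegrable A volume 0 t)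
    (hB : IntervalIntegrable B volume 0 t) (hbd : ∀ s ∈ Ioo 0 t, |B s| ≤ M) :
    CausalConvExists A B t := by
  have hA' : IntervalIntegrable (fun s => A (t - s)) volume 0 t := by
    simpa using (hA.comp_sub_left t).symm
  rw [intervalIntegrable_iff_integrableOn_Ioo_of_le ht] at hA' hB
  refine (intervalIntegrable_iff_integrableOn_Ioo_of_le ht).2
    (hA'.mul_bdd (c := M) hB.aestronglyMeasurable ?_)
  filter_upwards [ae_restrict_mem measurableSet_Ioo] with s hs using hbd s hs

lemma abs_causalConv_le (hA : IntervalIntegrable A volume 0 t)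
    (ht : 0 ≤ t) {M : ℝ} (hB : ∀ s ∈ Ioo 0 t, |B s| ≤ M) :
    |causalConv A B t| ≤ M * ∫ s in (0 : ℝ)..t, |A s| := by
  have hA' : IntervalIntegrable (fun s => A (t - s)) volume 0 t := by
    simpa using (hA.comp_sub_left t).symm
  have hrefl := intervalIntegral.integral_comp_sub_left (a := 0) (b := t) (fun s => |A s|) t
  simp only [sub_self, sub_zero] at hrefl
  rw [← hrefl, ← intervalIntegral.integral_const_mul]
  refine intervalIntegral.norm_integral_le_of_norm_le (f := fun s => A (t - s) * B s) ht ?_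
    (hA'.abs.const_mul M)
  have hne : ∀ᵐ s : ℝ, s ≠ t := by simp [ae_iff]
  filter_upwards [hne] with s hst hs
  rw [norm_mul, mul_comm]
  exact mul_le_mul_of_nonneg_right (hB s ⟨hs.1, lt_of_le_of_ne hs.2 hst⟩) (norm_nonneg _)

end CausalConv

section Associativity

open scoped Convolution

variable {A B C : ℝ → ℝ} {T : ℝ}

lemma integrable_indicator_Ioo (hA : IntervalIntegrable A volume 0 T) :
    Integrable ((Ioo 0 T).indicator A) := by
  rcases le_or_gt T 0 with hT | hT
  · simp [Ioo_eq_empty_of_le hT]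
  · exact (integrable_indicator_iff measurableSet_Ioo).2
      ((intervalIntegrable_iff_integrableOn_Ioo_of_le hT.le).1 hA)

lemma indicator_convolution_indicator {t : ℝ} (ht : t ∈ Ioc 0 T) :
    ((Ioo 0 T).indicator B ⋆[ContinuousLinearMap.mul ℝ ℝ] (Ioo 0 T).indicator A) t
      = causalConv A B t := by
  rw [convolution_mul, causalConv_eq_setIntegral ht.1.le, ← integral_indicator measurableSet_Ioo]
  congr 1 with s
  by_cases hs : s ∈ Ioo 0 t
  · have hsT : s ∈ Ioo 0 T := ⟨hs.1, hs.2.trans_le ht.2⟩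
    have htsT : t - s ∈ Ioo 0 T := ⟨sub_pos.2 hs.2, by linarith [hs.1, ht.2]⟩
    simp only [indicator_of_mem, hs, hsT, htsT, mul_comm]
  · rw [indicator_of_notMem hs, mul_eq_zero, indicator_apply_eq_zero, indicator_apply_eq_zero]
    by_contra! h
    exact hs ⟨h.1.1.1, sub_pos.1 h.2.1.1⟩

lemma intervalIntegrable_causalConv (hT : 0 ≤ T) (hA : IntervalIntegrable A volume 0 T)
    (hB : IntervalIntegrable B volume 0 T) : IntervalIntegrable (causalConv A B) volume 0 T := by
  rw [intervalIntegrable_iff_integrableOn_Ioo_of_le hT]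
  refine (((integrable_indicator_Ioo hB).integrable_convolution (ContinuousLinearMap.mul ℝ ℝ)
    (integrable_indicator_Ioo hA)).integrableOn (s := Ioo 0 T)).congr_fun (fun t ht => ?_)
    measurableSet_Ioo
  exact indicator_convolution_indicator ⟨ht.1, ht.2.le⟩

lemma convolution_indicator_eq_causalConv (A u : ℝ → ℝ) (hT : 0 ≤ T) :
    (u ⋆[ContinuousLinearMap.mul ℝ ℝ] (Ioo 0 T).indicator A) T = causalConv A u T := by
  rw [convolution_mul_swap, causalConv_comm, causalConv_eq_setIntegral hT,
    ← integral_indicator measurableSet_Ioo]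
  congr 1 with s
  exact (indicator_mul_right _ (fun s => u (T - s)) A).symm

lemma indicator_convolution_eq_causalConv (A u : ℝ → ℝ) (hT : 0 ≤ T) :
    ((Ioo 0 T).indicator A ⋆[ContinuousLinearMap.mul ℝ ℝ] u) T = causalConv u A T := by
  rw [convolution_mul, causalConv_eq_setIntegral hT, ← integral_indicator measurableSet_Ioo]
  congr 1 with s
  simp only [mul_comm (u _)]
  exact (indicator_mul_left _ A fun s => u (T - s)).symm

/-- Convolutions of integrable functions associate almost everywhere; boundedness of `|A| * |B|`
gives the identity at the point `T` itself. -/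
lemma causalConv_assoc {M : ℝ} (hT : 0 < T) (hA : IntervalIntegrable A volume 0 T)
    (hB : IntervalIntegrable B volume 0 T) (hC : IntervalIntegrable C volume 0 T)
    (hbd : ∀ t ∈ Ioo 0 T, causalConv (fun s => |A s|) (fun s => |B s|) t ≤ M) :
    causalConv A (causalConv B C) T = causalConv (causalConv A B) C T := by
  set L := ContinuousLinearMap.mul ℝ ℝ
  have hA' := integrable_indicator_Ioo hA
  have hB' := integrable_indicator_Ioo hB
  have hC' := integrable_indicator_Ioo hC
  have hnorm : ∀ u : ℝ → ℝ, (fun s => ‖(Ioo 0 T).indicator u s‖)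
      = (Ioo 0 T).indicator fun s => |u s| := fun u =>
    funext (norm_indicator_eq_indicator_norm u)
  have hexists : ConvolutionExistsAt (fun s => ‖(Ioo 0 T).indicator C s‖)
      ((fun s => ‖(Ioo 0 T).indicator B s‖) ⋆[L] fun s => ‖(Ioo 0 T).indicator A s‖) T L := by
    refine BddAbove.convolutionExistsAt L (s := Ioo 0 T) ⟨M, ?_⟩ measurableSet_Ioo ?_
      hC'.norm.integrableOn (hB'.norm.integrable_convolution L hA'.norm).aestronglyMeasurable
    · rintro _ ⟨t, ht, rfl⟩
      have ht : t ∈ Ioo 0 T := ⟨by linarith [ht.2], by linarith [ht.1]⟩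
      simp only [hnorm]
      rw [indicator_convolution_indicator ⟨ht.1, ht.2.le⟩, Real.norm_of_nonneg]
      · exact hbd t ht
      · exact intervalIntegral.integral_nonneg ht.1.le fun s _ => by positivity
    · refine Function.support_subset_iff'.2 fun s hs => ?_
      simp [L, indicator_of_notMem hs]
  have hassoc := convolution_assoc L L L L (fun x y z => mul_assoc x y z)
    hC'.aestronglyMeasurable hB'.aestronglyMeasurable hA'.aestronglyMeasurable
    (hC'.ae_convolution_exists L hB') (hB'.norm.ae_convolution_exists L hA'.norm) hexists
  rw [convolution_indicator_eq_causalConv _ _ hT.le, indicator_convolution_eq_causalConv _ _ hT.le]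
    at hassoc
  have hinner : ∀ u v : ℝ → ℝ, EqOn ((Ioo 0 T).indicator v ⋆[L] (Ioo 0 T).indicator u)
      (causalConv u v) (Ioo 0 T) := fun u v s hs =>
    indicator_convolution_indicator ⟨hs.1, hs.2.le⟩
  rwa [causalConv_congr_right hT.le (.of_forall (hinner B C)),
    causalConv_congr_left hT.le (hinner A B)] at hassoc

end Associativity

section PowerKernelConv

variable {p q t : ℝ} {C : ℝ → ℝ}

lemma integral_sub_rpow_mul_rpow (hp : 0 < p) (hq : 0 < q) (ht : 0 < t) :
    ∫ s in (0 : ℝ)..t, (t - s) ^ (p - 1) * s ^ (q - 1)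
      = t ^ (p + q - 1) * (Real.Gamma p * Real.Gamma q / Real.Gamma (p + q)) := by
  apply Complex.ofReal_injective
  have hcongr : ∀ s ∈ uIcc 0 t, (((t - s) ^ (p - 1) * s ^ (q - 1) : ℝ) : ℂ)
      = (s : ℂ) ^ ((q : ℂ) - 1) * ((t : ℂ) - s) ^ ((p : ℂ) - 1) := by
    intro s hs
    rw [uIcc_of_le ht.le] at hs
    rw [Complex.ofReal_mul, Complex.ofReal_cpow (sub_nonneg.2 hs.2), Complex.ofReal_cpow hs.1]
    push_cast; ring
  rw [← intervalIntegral.integral_ofReal, intervalIntegral.integral_congr hcongr,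
    Complex.betaIntegral_scaled _ _ ht,
    Complex.betaIntegral_eq_Gamma_mul_div _ _ (by simpa) (by simpa), Complex.ofReal_mul,
    Complex.ofReal_cpow ht.le, ← Complex.ofReal_add, Complex.Gamma_ofReal, Complex.Gamma_ofReal,
    Complex.Gamma_ofReal, add_comm q p]
  push_cast
  ring

lemma causalConv_powerKernel_powerKernel (hp : 0 < p) (hq : 0 < q) (ht : 0 < t) :
    causalConv (powerKernel p) (powerKernel q) t = powerKernel (p + q) t := by
  have hbeta := integral_sub_rpow_mul_rpow hp hq ht
  have hΓp := (Real.Gamma_pos_of_pos hp).ne'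
  have hΓq := (Real.Gamma_pos_of_pos hq).ne'
  simp only [causalConv, powerKernel, div_mul_div_comm, intervalIntegral.integral_div]
  rw [hbeta]
  field_simp

lemma causalConvExists_powerKernel_powerKernel (hp : 0 < p) (hq : 0 < q) (ht : 0 < t) :
    CausalConvExists (powerKernel p) (powerKernel q) t := by
  apply intervalIntegral.intervalIntegrable_of_integral_ne_zero
  change causalConv _ _ t ≠ 0
  rw [causalConv_powerKernel_powerKernel hp hq ht]
  exact (powerKernel_pos (add_pos hp hq) ht).ne'

lemma intervalIntegrable_powerKernel (hp : 0 < p) (t : ℝ) :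
    IntervalIntegrable (powerKernel p) volume 0 t :=
  (intervalIntegral.intervalIntegrable_rpow' (by linarith)).div_const _

lemma causalConv_powerKernel_one (B : ℝ → ℝ) (t : ℝ) :
    causalConv (powerKernel 1) B t = ∫ s in (0 : ℝ)..t, B s := by
  simp [causalConv, powerKernel_one]

lemma causalConv_powerKernel_causalConv (hp : 0 < p) (hq : 0 < q) (hpq : 1 ≤ p + q) (ht : 0 < t)
    (hC : IntervalIntegrable C volume 0 t) :
    causalConv (powerKernel p) (causalConv (powerKernel q) C) t
      = causalConv (powerKernel (p + q)) C t := by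
  have habs : ∀ r > 0, ∀ u ∈ Ioo 0 t, |powerKernel r u| = powerKernel r u := fun r hr u hu =>
    abs_of_nonneg (powerKernel_nonneg hr hu.1.le)
  rw [causalConv_assoc (M := powerKernel (p + q) t) ht (intervalIntegrable_powerKernel hp t)
    (intervalIntegrable_powerKernel hq t) hC]
  · exact causalConv_congr_left ht.le fun u hu => causalConv_powerKernel_powerKernel hp hq hu.1
  · intro u hu
    have hsub : Ioo 0 u ⊆ Ioo 0 t := Ioo_subset_Ioo_right hu.2.le
    rw [causalConv_congr_left hu.1.le fun s hs => habs p hp s (hsub hs),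
      causalConv_congr_right hu.1.le (.of_forall fun s hs => habs q hq s (hsub hs)),
      causalConv_powerKernel_powerKernel hp hq hu.1]
    exact powerKernel_le_powerKernel hpq hu.1.le hu.2.le

lemma abs_causalConv_powerKernel_le (hp : 1 ≤ p) (hC : IntervalIntegrable C volume 0 t) {s : ℝ}
    (hs : s ∈ Ioo 0 t) :
    |causalConv (powerKernel p) C s| ≤ powerKernel p t * ∫ u in (0 : ℝ)..t, |C u| := by
  have hp0 : 0 < p := zero_lt_one.trans_le hp
  have ht : 0 < t := hs.1.trans hs.2
  rw [causalConv_comm]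
  calc |causalConv C (powerKernel p) s| ≤ powerKernel p t * ∫ u in (0 : ℝ)..s, |C u| := by
        refine abs_causalConv_le (hC.mono_set ?_) hs.1.le fun u hu => ?_
        · rw [uIcc_of_le hs.1.le, uIcc_of_le ht.le]
          exact Icc_subset_Icc_right hs.2.le
        · rw [abs_of_nonneg (powerKernel_nonneg hp0 hu.1.le)]
          exact powerKernel_le_powerKernel hp hu.1.le (hu.2.trans hs.2).le
    _ ≤ powerKernel p t * ∫ u in (0 : ℝ)..t, |C u| := by
        have := powerKernel_nonneg hp0 ht.le
        gcongr
        exact intervalIntegral.integral_mono_interval le_rfl hs.1.le hs.2.le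
          (.of_forall fun _ => abs_nonneg _) hC.abs

end PowerKernelConv

/-! ### Laplace transforms -/

/-- The Laplace transform `∫₀^∞ e^{-st} K(t) dt`, at complex `s`. -/
noncomputable def laplace (K : ℝ → ℝ) (s : ℂ) : ℂ :=
  ∫ t in Ioi (0 : ℝ), Complex.exp (-(s * t)) * K t

section Laplace

variable {K : ℝ → ℝ} {μ : ℝ} {s : ℂ}

lemma norm_cexp_neg_mul_ofReal (s : ℂ) (t x : ℝ) :
    ‖Complex.exp (-(s * t)) * (x : ℂ)‖ = Real.exp (-(s.re * t)) * |x| := by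
  simp [Complex.norm_exp]

lemma laplace_ofReal (K : ℝ → ℝ) (r : ℝ) :
    laplace K r = ((∫ t in Ioi (0 : ℝ), Real.exp (-(r * t)) * K t : ℝ) : ℂ) := by
  rw [laplace, ← integral_complex_ofReal]
  push_cast
  rfl

/-- The Laplace transform of a nonnegative kernel `K` is the complex moment generating function of
the measure `K(t) dt`, reflected at the origin. -/
lemma differentiableOn_laplace (hK : Measurable K) (hK0 : ∀ t > 0, 0 ≤ K t)
    (hint : ∀ r > 0, IntegrableOn (fun t => Real.exp (-(r * t)) * K t) (Ioi 0)) :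
    DifferentiableOn ℂ (laplace K) {s | 0 < s.re} := by
  set ρ : Measure ℝ := (volume.restrict (Ioi 0)).withDensity fun t => ENNReal.ofReal (K t)
  have hmeas : Measurable fun t => ENNReal.ofReal (K t) := hK.ennreal_ofReal
  have hfin : ∀ᵐ t ∂volume.restrict (Ioi (0 : ℝ)), ENNReal.ofReal (K t) < ⊤ :=
    .of_forall fun _ => ENNReal.ofReal_lt_top
  have hmgf : ∀ z, laplace K z = ProbabilityTheory.complexMGF id ρ (-z) := fun z => by
    rw [ProbabilityTheory.complexMGF, integral_withDensity_eq_integral_toReal_smul hmeas hfin]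
    refine setIntegral_congr_fun measurableSet_Ioi fun t ht => ?_
    simp [ENNReal.toReal_ofReal (hK0 t ht), mul_comm]
  have hset : Iio 0 ⊆ ProbabilityTheory.integrableExpSet id ρ := fun r hr => by
    simp only [ProbabilityTheory.integrableExpSet, mem_ofPred_eq]
    rw [integrable_withDensity_iff hmeas hfin]
    refine (hint (-r) (neg_pos.2 hr)).congr_fun (fun t ht => ?_) measurableSet_Ioi
    simp [ENNReal.toReal_ofReal (hK0 t ht)]
  refine DifferentiableOn.congr (fun z hz => ?_) fun z _ => hmgf z
  have hz' : (-z).re ∈ interior (ProbabilityTheory.integrableExpSet id ρ) :=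
    interior_maximal hset isOpen_Iio (by simpa using hz)
  exact ((ProbabilityTheory.analyticAt_complexMGF hz').differentiableAt.comp z
    differentiableAt_id.neg).differentiableWithinAt

lemma eqOn_re_pos_of_eq_ofReal {F G : ℂ → ℂ} (hF : DifferentiableOn ℂ F {s | 0 < s.re})
    (hG : DifferentiableOn ℂ G {s | 0 < s.re}) (hFG : ∀ r : ℝ, 0 < r → F r = G r) :
    EqOn F G {s | 0 < s.re} := by
  have hU : IsOpen {s : ℂ | 0 < s.re} := isOpen_lt continuous_const Complex.continuous_re
  have hofReal : Tendsto (fun r : ℝ => (r : ℂ)) (𝓝[≠] 1) (𝓝[≠] (1 : ℂ)) := by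
    have h := Complex.continuous_ofReal.continuousWithinAt.tendsto_nhdsWithin
      (s := {(1 : ℝ)}ᶜ) (t := {(1 : ℂ)}ᶜ) (x := 1) fun x hx => by simpa using hx
    rwa [Complex.ofReal_one] at h
  have hfreq : ∃ᶠ z in 𝓝[≠] (1 : ℂ), F z = G z := by
    refine hofReal.frequently (Eventually.frequently ?_)
    filter_upwards [nhdsWithin_le_nhds (Ioi_mem_nhds zero_lt_one)] with r hr using hFG r hr
  exact (hF.analyticOnNhd hU).eqOn_of_preconnected_of_frequently_eq (hG.analyticOnNhd hU)
    (convex_halfSpace_re_gt 0).isPreconnected (z₀ := 1) (by simp) hfreq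

lemma integrableOn_exp_mul_powerKernel {r : ℝ} (hμ : 0 < μ) (hr : 0 < r) :
    IntegrableOn (fun t => Real.exp (-(r * t)) * powerKernel μ t) (Ioi 0) := by
  have h : IntegrableOn (fun t => t ^ (μ - 1) * Real.exp (-r * t ^ (1 : ℝ)) / Real.Gamma μ)
      (Ioi 0) := Integrable.div_const (integrableOn_rpow_mul_exp_neg_mul_rpow (by linarith)
        zero_lt_one hr) _
  refine h.congr_fun (fun t _ => ?_) measurableSet_Ioi
  simp only [powerKernel, Real.rpow_one]
  ring_nf

lemma integral_exp_mul_powerKernel {r : ℝ} (hμ : 0 < μ) (hr : 0 < r) :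
    ∫ t in Ioi 0, Real.exp (-(r * t)) * powerKernel μ t = r ^ (-μ) := by
  have hΓ := (Real.Gamma_pos_of_pos hμ).ne'
  have hform : ∀ t, Real.exp (-(r * t)) * powerKernel μ t
      = t ^ (μ - 1) * Real.exp (-(r * t)) / Real.Gamma μ := fun t => by
    rw [powerKernel]; ring
  simp only [hform]
  rw [integral_div, Real.integral_rpow_mul_exp_neg_mul_Ioi hμ hr, mul_div_cancel_right₀ _ hΓ,
    one_div, Real.inv_rpow hr.le, Real.rpow_neg hr.le]

lemma laplace_powerKernel (hμ : 0 < μ) (hs : 0 < s.re) :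
    laplace (powerKernel μ) s = s ^ (-(μ : ℂ)) := by
  have hcpow : DifferentiableOn ℂ (fun z : ℂ => z ^ (-(μ : ℂ))) {z | 0 < z.re} := fun z hz =>
    (differentiableAt_id.cpow_const (Or.inl hz)).differentiableWithinAt
  refine eqOn_re_pos_of_eq_ofReal (differentiableOn_laplace (measurable_powerKernel μ)
    (fun t ht => powerKernel_nonneg hμ (le_of_lt ht))
    fun r hr => integrableOn_exp_mul_powerKernel hμ hr) hcpow (fun r hr => ?_) hs
  rw [laplace_ofReal, integral_exp_mul_powerKernel hμ hr, Complex.ofReal_cpow hr.le]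
  push_cast
  rfl

lemma integrableOn_cexp_mul_powerKernel (hμ : 0 < μ) (hs : 0 < s.re) :
    IntegrableOn (fun t : ℝ => Complex.exp (-(s * t)) * (powerKernel μ t : ℂ)) (Ioi 0) := by
  refine Integrable.mono' (integrableOn_exp_mul_powerKernel hμ hs)
    (by fun_prop : Measurable _).aestronglyMeasurable ?_
  filter_upwards [ae_restrict_mem measurableSet_Ioi] with t ht
  rw [norm_cexp_neg_mul_ofReal, abs_of_nonneg (powerKernel_nonneg hμ (le_of_lt ht))]

lemma laplace_tsum_powerKernel {c m : ℕ → ℝ} (hs : 0 < s.re) (hm : ∀ n, 0 < m n)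
    (hsum : Summable fun n => |c n| * s.re ^ (-m n)) :
    laplace (fun t => ∑' n, c n * powerKernel (m n) t) s
      = ∑' n, (c n : ℂ) * s ^ (-(m n : ℂ)) := by
  have hint : ∀ n, Integrable (fun t : ℝ => (c n : ℂ) *
      (Complex.exp (-(s * t)) * (powerKernel (m n) t : ℂ))) (volume.restrict (Ioi 0)) :=
    fun n => (integrableOn_cexp_mul_powerKernel (hm n) hs).const_mul _
  have hnorm : ∀ n, ∫ t in Ioi (0 : ℝ), ‖(c n : ℂ) *
      (Complex.exp (-(s * t)) * (powerKernel (m n) t : ℂ))‖ = |c n| * s.re ^ (-m n) := fun n => by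
    rw [← integral_exp_mul_powerKernel (hm n) hs, ← integral_const_mul]
    refine setIntegral_congr_fun measurableSet_Ioi fun t ht => ?_
    simp only [norm_mul (c n : ℂ), norm_cexp_neg_mul_ofReal, Complex.norm_real, Real.norm_eq_abs,
      abs_of_nonneg (powerKernel_nonneg (hm n) (le_of_lt ht))]
  have htsum := (hasSum_integral_of_summable_integral_norm hint
    (by simpa only [hnorm] using hsum)).tsum_eq
  simp only [integral_const_mul, ← laplace.eq_def, laplace_powerKernel (hm _) hs] at htsum
  rw [htsum]
  refine setIntegral_congr_fun measurableSet_Ioi fun t _ => ?_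
  simp only [Complex.ofReal_tsum, ← tsum_mul_left]
  congr 1 with n
  push_cast; ring

lemma laplace_congr {K' : ℝ → ℝ} (h : EqOn K K' (Ioi 0)) (s : ℂ) : laplace K s = laplace K' s :=
  setIntegral_congr_fun measurableSet_Ioi fun t ht => by simp only [h ht]

end Laplace

/-! ### Mittag-Leffler kernels -/

/-- The Mittag-Leffler kernel `t^{ν-1} E_{α,ν}(-a t^α)`, as the series `∑ (-a)ⁿ k_{αn+ν}(t)`; only
its values at `t > 0` are meaningful. It is the resolvent kernel of `a k_α`, with Laplace transform
`s^{α-ν}/(s^α + a)`. -/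
noncomputable def mlKernel (a α ν t : ℝ) : ℝ :=
  ∑' n : ℕ, (-a) ^ n * powerKernel (α * n + ν) t

section MittagLeffler

variable {a α ν t T : ℝ}

lemma eventually_abs_mul_rpow_neg_lt_one (a : ℝ) (hα : 0 < α) :
    ∀ᶠ r : ℝ in atTop, |a| * r ^ (-α) < 1 := by
  have h := (tendsto_rpow_neg_atTop hα).const_mul |a|
  rw [mul_zero] at h
  exact h.eventually_lt_const zero_lt_one

lemma pow_mul_rpow_sub {S : ℝ} (hS : 0 < S) (a x : ℝ) (n : ℕ) :
    a ^ n * S ^ (x - α * n) = S ^ x * (a * S ^ (-α)) ^ n := by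
  rw [mul_pow, ← Real.rpow_natCast (S ^ (-α)), ← Real.rpow_mul hS.le, sub_eq_add_neg,
    Real.rpow_add hS]
  ring_nf

lemma abs_pow_mul_powerKernel {μ : ℝ} (a : ℝ) (n : ℕ) (hμ : 0 < μ) (ht : 0 ≤ t) :
    |(-a) ^ n * powerKernel μ t| = |a| ^ n * powerKernel μ t := by
  rw [abs_mul, abs_pow, abs_neg, abs_of_nonneg (powerKernel_nonneg hμ ht)]

lemma summable_mlKernel (a ν : ℝ) (hα : 0 < α) (ht : 0 ≤ t) :
    Summable fun n : ℕ => (-a) ^ n * powerKernel (α * n + ν) t := by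
  obtain ⟨S, hq, hS⟩ :=
    ((eventually_abs_mul_rpow_neg_lt_one a hα).and (eventually_gt_atTop 0)).exists
  have hlarge : ∀ᶠ n : ℕ in atTop, 1 ≤ α * n + ν :=
    (tendsto_atTop_add_const_right _ _ (tendsto_natCast_atTop_atTop.const_mul_atTop
      hα)).eventually_ge_atTop 1
  refine Summable.of_norm_bounded_eventually_nat
    ((summable_geometric_of_lt_one (by positivity) hq).mul_left (S ^ (1 - ν) * Real.exp (S * t))) ?_
  filter_upwards [hlarge] with n hn
  rw [Real.norm_eq_abs, abs_pow_mul_powerKernel a n (zero_lt_one.trans_le hn) ht]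
  calc |a| ^ n * powerKernel (α * n + ν) t
      ≤ |a| ^ n * (S ^ (1 - (α * n + ν)) * Real.exp (S * t)) := by
        gcongr; exact powerKernel_le_rpow_mul_exp hn hS ht
    _ = |a| ^ n * S ^ ((1 - ν) - α * n) * Real.exp (S * t) := by ring_nf
    _ = S ^ (1 - ν) * Real.exp (S * t) * (|a| * S ^ (-α)) ^ n := by
        rw [pow_mul_rpow_sub hS]; ring

lemma mlKernel_eq_powerKernel_sub (a ν : ℝ) (hα : 0 < α) (ht : 0 ≤ t) :
    mlKernel a α ν t = powerKernel ν t - a * mlKernel a α (ν + α) t := by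
  rw [mlKernel, mlKernel, (summable_mlKernel a ν hα ht).tsum_eq_zero_add, ← tsum_mul_left,
    sub_eq_add_neg, ← tsum_neg]
  congr 1
  · simp
  · congr 1 with n
    push_cast; ring_nf

lemma powerKernel_div_powerKernel (ν δ : ℝ) (ht : 0 < t) :
    powerKernel (δ + ν) t / powerKernel ν t = Real.Gamma ν / Real.Gamma (δ + ν) * t ^ δ := by
  have hpow : t ^ (δ + ν - 1) = t ^ δ * t ^ (ν - 1) := by rw [← Real.rpow_add ht]; ring_nf
  have := (Real.rpow_pos_of_pos ht (ν - 1)).ne'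
  rw [powerKernel, powerKernel, hpow]
  field_simp

lemma powerKernel_div_powerKernel_le {δ : ℝ} (hν : 0 < ν) (hδ : 0 ≤ δ) (ht : 0 < t) (htT : t ≤ T) :
    powerKernel (δ + ν) t / powerKernel ν t ≤ powerKernel (δ + ν) T / powerKernel ν T := by
  rw [powerKernel_div_powerKernel ν δ ht, powerKernel_div_powerKernel ν δ (ht.trans_le htT)]
  have := Real.Gamma_pos_of_pos hν
  have := Real.Gamma_pos_of_pos (add_pos_of_nonneg_of_pos hδ hν)
  gcongr

lemma abs_pow_mul_powerKernel_div_le (a : ℝ) (hα : 0 ≤ α) (hν : 0 < ν) (n : ℕ) (ht : 0 < t)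
    (htT : t ≤ T) :
    |(-a) ^ n * (powerKernel (α * n + ν) t / powerKernel ν t)|
      ≤ |a| ^ n * powerKernel (α * n + ν) T / powerKernel ν T := by
  have hn : 0 < α * n + ν := by positivity
  rw [abs_mul, abs_pow, abs_neg, abs_of_nonneg (div_nonneg (powerKernel_nonneg hn ht.le)
    (powerKernel_nonneg hν ht.le)), mul_div_assoc]
  gcongr |a| ^ n * ?_
  exact powerKernel_div_powerKernel_le hν (by positivity) ht htT

lemma powerKernel_mul_tsum (a : ℝ) (hν : 0 < ν) (ht : 0 < t) :
    powerKernel ν t * ∑' n : ℕ, (-a) ^ n * (powerKernel (α * n + ν) t / powerKernel ν t)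
      = mlKernel a α ν t := by
  have := (powerKernel_pos hν ht).ne'
  rw [mlKernel, ← tsum_mul_left]
  congr 1 with n
  field_simp

lemma summable_abs_pow_mul_powerKernel_div (a ν : ℝ) (hα : 0 < α) (hT : 0 ≤ T) :
    Summable fun n : ℕ => |a| ^ n * powerKernel (α * n + ν) T / powerKernel ν T := by
  simpa using (summable_mlKernel (-|a|) ν hα hT).div_const (powerKernel ν T)

lemma exists_abs_mlKernel_le (a : ℝ) (hα : 0 < α) (hν : 0 < ν) (hT : 0 ≤ T) :
    ∃ M, ∀ t ∈ Ioc 0 T, |mlKernel a α ν t| ≤ M * powerKernel ν t := by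
  refine ⟨∑' n : ℕ, |a| ^ n * powerKernel (α * n + ν) T / powerKernel ν T, fun t ht => ?_⟩
  rw [← powerKernel_mul_tsum a hν ht.1, abs_mul, abs_of_nonneg (powerKernel_nonneg hν ht.1.le),
    mul_comm]
  gcongr
  · exact powerKernel_nonneg hν ht.1.le
  · rw [← Real.norm_eq_abs]
    exact tsum_of_norm_bounded (summable_abs_pow_mul_powerKernel_div a ν hα hT).hasSum
      fun n => abs_pow_mul_powerKernel_div_le a hα.le hν n ht.1 ht.2

lemma continuousOn_mlKernel (a : ℝ) (hα : 0 < α) (hν : 0 < ν) :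
    ContinuousOn (mlKernel a α ν) (Ioi 0) := by
  have hIoo : ∀ T > 0, ContinuousOn (mlKernel a α ν) (Ioo 0 T) := fun T hT => by
    have hk : ∀ μ, ContinuousOn (powerKernel μ) (Ioo 0 T) := fun μ =>
      (continuousOn_powerKernel μ).mono Ioo_subset_Ioi_self
    refine ((hk ν).mul (continuousOn_tsum (fun n => continuousOn_const.mul
      ((hk _).div (hk ν) fun t ht => (powerKernel_pos hν ht.1).ne'))
        (summable_abs_pow_mul_powerKernel_div a ν hα hT.le) fun n t ht =>
        abs_pow_mul_powerKernel_div_le a hα.le hν n ht.1 ht.2.le)).congr fun t ht =>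
      (powerKernel_mul_tsum a hν ht.1).symm
  intro t ht
  have ht1 : t < t + 1 := lt_add_one t
  exact ((hIoo (t + 1) (zero_lt_one.trans (lt_add_of_pos_left 1 ht))).continuousAt
    (Ioo_mem_nhds ht ht1)).continuousWithinAt

lemma intervalIntegrable_mlKernel (a : ℝ) (hα : 0 < α) (hν : 0 < ν) (hT : 0 ≤ T) :
    IntervalIntegrable (mlKernel a α ν) volume 0 T := by
  obtain ⟨M, hM⟩ := exists_abs_mlKernel_le a hα hν hT
  rw [intervalIntegrable_iff_integrableOn_Ioc_of_le hT]
  refine Integrable.mono' (((intervalIntegrable_iff_integrableOn_Ioc_of_le hT).1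
    (intervalIntegrable_powerKernel hν T)).const_mul M) (((continuousOn_mlKernel a hα hν).mono
      Ioc_subset_Ioi_self).aestronglyMeasurable measurableSet_Ioc) ?_
  exact (ae_restrict_iff' measurableSet_Ioc).2 (.of_forall hM)

lemma causalConv_mlKernel_powerKernel {κ : ℝ} (a : ℝ) (hα : 0 < α) (hν : 0 < ν) (hκ : 0 < κ)
    (ht : 0 < t) :
    causalConv (mlKernel a α ν) (powerKernel κ) t = mlKernel a α (ν + κ) t := by
  have hm : ∀ n : ℕ, 0 < α * n + ν := fun n => by positivity
  have hint : ∀ n : ℕ, IntegrableOn (fun s => powerKernel (α * n + ν) (t - s) * powerKernel κ s)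
      (Ioo 0 t) := fun n => (intervalIntegrable_iff_integrableOn_Ioo_of_le ht.le).1
    (causalConvExists_powerKernel_powerKernel (hm n) hκ ht)
  have hval : ∀ n : ℕ, ∫ s in Ioo 0 t, powerKernel (α * n + ν) (t - s) * powerKernel κ s
      = powerKernel (α * n + (ν + κ)) t := fun n => by
    rw [← causalConv_eq_setIntegral ht.le, causalConv_powerKernel_powerKernel (hm n) hκ ht,
      add_assoc]
  have hnorm : ∀ n : ℕ,
      ∫ s in Ioo 0 t, ‖(-a) ^ n * (powerKernel (α * n + ν) (t - s) * powerKernel κ s)‖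
        = |a| ^ n * powerKernel (α * n + (ν + κ)) t := fun n => by
    rw [← hval n, ← integral_const_mul]
    refine setIntegral_congr_fun measurableSet_Ioo fun s hs => ?_
    have hnonneg := mul_nonneg (powerKernel_nonneg (hm n) (sub_nonneg.2 hs.2.le))
      (powerKernel_nonneg hκ hs.1.le)
    simp only [Real.norm_eq_abs, abs_mul ((-a) ^ n), abs_pow, abs_neg, abs_of_nonneg hnonneg]
  have hsum : Summable fun n : ℕ => |a| ^ n * powerKernel (α * n + (ν + κ)) t := by
    simpa using summable_mlKernel (-|a|) (ν + κ) hα ht.le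
  have htsum := (hasSum_integral_of_summable_integral_norm
    (fun n => (hint n).const_mul ((-a) ^ n)) (by simpa only [hnorm] using hsum)).tsum_eq
  simp only [integral_const_mul, hval] at htsum
  rw [causalConv_eq_setIntegral ht.le, mlKernel, htsum]
  refine setIntegral_congr_fun measurableSet_Ioo fun s _ => ?_
  simp only [mlKernel, ← tsum_mul_right]
  congr 1 with n
  ring

end MittagLeffler

section LaplaceMittagLeffler

variable {a α ν : ℝ} {s : ℂ}

lemma norm_mul_cpow_neg_lt_one (hα : 0 ≤ α) (hs : 0 < s.re) (hq : |a| * s.re ^ (-α) < 1) :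
    ‖-(a * s ^ (-(α : ℂ)))‖ < 1 := by
  rw [norm_neg, norm_mul, Complex.norm_real, Real.norm_eq_abs, ← Complex.ofReal_neg,
    Complex.norm_cpow_real]
  refine lt_of_le_of_lt ?_ hq
  gcongr |a| * ?_
  exact Real.rpow_le_rpow_of_nonpos hs (Complex.re_le_norm s) (by linarith)

lemma laplace_tsum_pow_mul_powerKernel {d : ℕ → ℝ} {μ : ℝ} (hα : 0 ≤ α) (hμ : 0 < μ)
    (hs : 0 < s.re) (hsum : Summable fun n => |d n| * (|a| * s.re ^ (-α)) ^ n) :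
    laplace (fun t => ∑' n : ℕ, (-a) ^ n * d n * powerKernel (α * n + μ) t) s
      = s ^ (-(μ : ℂ)) * ∑' n, (d n : ℂ) * (-(a * s ^ (-(α : ℂ)))) ^ n := by
  have hs0 : s ≠ 0 := fun h => by simp [h] at hs
  have hnorm : ∀ n : ℕ, |(-a) ^ n * d n| * s.re ^ (-(α * n + μ))
      = s.re ^ (-μ) * (|d n| * (|a| * s.re ^ (-α)) ^ n) := fun n => by
    have hpow := pow_mul_rpow_sub (α := α) hs |a| (-μ) n
    rw [abs_mul, abs_pow, abs_neg, show -(α * n + μ) = -μ - α * n by ring]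
    linear_combination |d n| * hpow
  rw [laplace_tsum_powerKernel hs (fun n => by positivity)
    (by simpa only [hnorm] using hsum.mul_left _), ← tsum_mul_left]
  congr 1 with n
  have hpow : s ^ (-((α * n + μ : ℝ) : ℂ)) = s ^ (-(μ : ℂ)) * (s ^ (-(α : ℂ))) ^ n := by
    rw [← Complex.cpow_nat_mul, ← Complex.cpow_add _ _ hs0]
    congr 1; push_cast; ring
  rw [hpow, ← neg_mul, mul_pow]
  push_cast; ring

lemma laplace_mlKernel (hα : 0 ≤ α) (hν : 0 < ν) (hs : 0 < s.re)
    (hq : |a| * s.re ^ (-α) < 1) :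
    laplace (mlKernel a α ν) s = s ^ (-(ν : ℂ)) / (1 + a * s ^ (-(α : ℂ))) := by
  have h := laplace_tsum_pow_mul_powerKernel (a := a) (d := fun _ => 1) hα hν hs
    (by simpa using summable_geometric_of_lt_one (by positivity) hq)
  simp only [mul_one, Complex.ofReal_one, one_mul,
    tsum_geometric_of_norm_lt_one (norm_mul_cpow_neg_lt_one hα hs hq), sub_neg_eq_add] at h
  exact h

lemma integral_exp_mul_mlKernel {r : ℝ} (hα : 0 ≤ α) (hν : 0 < ν) (hr : 0 < r)
    (hq : |a| * r ^ (-α) < 1) :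
    ∫ t in Ioi 0, Real.exp (-(r * t)) * mlKernel a α ν t = r ^ (-ν) / (1 + a * r ^ (-α)) := by
  apply Complex.ofReal_injective
  rw [← laplace_ofReal, laplace_mlKernel hα hν (by simpa) (by simpa)]
  push_cast [Complex.ofReal_cpow hr.le]
  rfl

lemma integrableOn_exp_mul_mlKernel {r : ℝ} (hα : 0 ≤ α) (hν : 0 < ν) (hr : 0 < r)
    (hq : |a| * r ^ (-α) < 1) :
    IntegrableOn (fun t => Real.exp (-(r * t)) * mlKernel a α ν t) (Ioi 0) := by
  refine not_imp_comm.1 integral_undef ?_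
  rw [integral_exp_mul_mlKernel hα hν hr hq]
  have hden : 0 < 1 + a * r ^ (-α) := by
    have := neg_abs_le (a * r ^ (-α))
    rw [abs_mul, abs_of_nonneg (Real.rpow_nonneg hr.le _)] at this
    linarith
  exact (div_pos (Real.rpow_pos_of_pos hr _) hden).ne'

end LaplaceMittagLeffler

/-! ### Completely monotone sequences -/

/-- The differences `(-1)ᵏ Δᵏ u` of orders `k ≤ n` are nonnegative. A sequence with this property
for every `n` is completely monotone in the sense of Hausdorff; stopping at level `n` makes closure
properties accessible to induction on `n`. -/
def CompletelyMonotoneUpTo : ℕ → (ℕ → ℝ) → Prop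
  | 0, u => ∀ j, 0 ≤ u j
  | n + 1, u => (∀ j, 0 ≤ u j) ∧ CompletelyMonotoneUpTo n fun j => u j - u (j + 1)

namespace CompletelyMonotoneUpTo

variable {n : ℕ} {u v φ : ℕ → ℝ}

lemma nonneg (h : CompletelyMonotoneUpTo n u) (j : ℕ) : 0 ≤ u j := by
  cases n with
  | zero => exact h j
  | succ n => exact h.1 j

lemma of_succ (h : CompletelyMonotoneUpTo (n + 1) u) : CompletelyMonotoneUpTo n u := by
  induction n generalizing u with
  | zero => exact h.1
  | succ n ih => exact ⟨h.1, ih h.2⟩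

lemma shift (h : CompletelyMonotoneUpTo n u) : CompletelyMonotoneUpTo n fun j => u (j + 1) := by
  induction n generalizing u with
  | zero => exact fun j => h (j + 1)
  | succ n ih => exact ⟨fun j => h.1 (j + 1), ih h.2⟩

lemma add (hu : CompletelyMonotoneUpTo n u) (hv : CompletelyMonotoneUpTo n v) :
    CompletelyMonotoneUpTo n fun j => u j + v j := by
  induction n generalizing u v with
  | zero => exact fun j => add_nonneg (hu j) (hv j)
  | succ n ih =>
    refine ⟨fun j => add_nonneg (hu.1 j) (hv.1 j), ?_⟩
    convert ih hu.2 hv.2 using 2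
    ring

lemma const_mul {c : ℝ} (hc : 0 ≤ c) (h : CompletelyMonotoneUpTo n u) :
    CompletelyMonotoneUpTo n fun j => c * u j := by
  induction n generalizing u with
  | zero => exact fun j => mul_nonneg hc (h j)
  | succ n ih =>
    refine ⟨fun j => mul_nonneg hc (h.1 j), ?_⟩
    convert ih h.2 using 2
    ring

lemma mul (hu : CompletelyMonotoneUpTo n u) (hv : CompletelyMonotoneUpTo n v) :
    CompletelyMonotoneUpTo n fun j => u j * v j := by
  induction n generalizing u v with
  | zero => exact fun j => mul_nonneg (hu j) (hv j)
  | succ n ih =>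
    refine ⟨fun j => mul_nonneg (hu.1 j) (hv.1 j), ?_⟩
    convert (ih hu.2 hv.of_succ).add (ih hu.of_succ.shift hv.2) using 2
    ring

lemma geometric (n : ℕ) {q : ℝ} (hq : 0 ≤ q) (hq1 : q ≤ 1) :
    CompletelyMonotoneUpTo n fun j => q ^ j := by
  induction n with
  | zero => exact fun j => pow_nonneg hq j
  | succ n ih =>
    refine ⟨fun j => pow_nonneg hq j, ?_⟩
    convert ih.const_mul (sub_nonneg.2 hq1) using 2
    ring

lemma pow (h : CompletelyMonotoneUpTo n u) (k : ℕ) :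
    CompletelyMonotoneUpTo n fun j => u j ^ k := by
  induction k with
  | zero => simpa using geometric n zero_le_one le_rfl
  | succ k ih => simpa only [pow_succ] using ih.mul h

lemma of_tendsto {A : ℕ → ℕ → ℝ} (hA : ∀ k, CompletelyMonotoneUpTo n (A k))
    (hlim : ∀ j, Tendsto (fun k => A k j) atTop (𝓝 (u j))) : CompletelyMonotoneUpTo n u := by
  have hnonneg : ∀ j, 0 ≤ u j := fun j => ge_of_tendsto' (hlim j) fun k => (hA k).nonneg j
  induction n generalizing A u with
  | zero => exact hnonneg
  | succ n ih =>
    have hdiff := fun j => (hlim j).sub (hlim (j + 1))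
    exact ⟨hnonneg, ih (fun k => (hA k).2) hdiff
      fun j => ge_of_tendsto' (hdiff j) fun k => (hA k).2.nonneg j⟩

lemma integral {X : Type*} [MeasurableSpace X] {ρ : Measure X} {A : X → ℕ → ℝ}
    (hint : ∀ j, Integrable (fun x => A x j) ρ) (hA : ∀ᵐ x ∂ρ, CompletelyMonotoneUpTo n (A x)) :
    CompletelyMonotoneUpTo n fun j => ∫ x, A x j ∂ρ := by
  have hnonneg : ∀ j, 0 ≤ ∫ x, A x j ∂ρ := fun j =>
    integral_nonneg_of_ae (hA.mono fun x hx => hx.nonneg j)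
  induction n generalizing A with
  | zero => exact hnonneg
  | succ n ih =>
    have hA' := hA.mono fun x hx => hx.2
    refine ⟨hnonneg, ?_⟩
    simp only [← integral_sub (hint _) (hint _)]
    exact ih (fun j => (hint j).sub (hint (j + 1))) hA'
      fun j => integral_nonneg_of_ae (hA'.mono fun x hx => hx.nonneg j)

/-- The differences of `1/φ` are `(φ (j + 1) - φ j) (1/φ j) (1/φ (j + 1))`, which allows induction
on the level. -/
lemma inv (hφ : ∀ j, 0 < φ j) (h : ∀ n, CompletelyMonotoneUpTo n fun j => φ (j + 1) - φ j)
    (n : ℕ) : CompletelyMonotoneUpTo n fun j => (φ j)⁻¹ := by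
  have hnonneg : ∀ j, 0 ≤ (φ j)⁻¹ := fun j => (inv_pos.2 (hφ j)).le
  induction n with
  | zero => exact hnonneg
  | succ n ih =>
    refine ⟨hnonneg, ?_⟩
    convert (h n).mul (ih.mul ih.shift) using 2 with j
    have := (hφ j).ne'
    have := (hφ (j + 1)).ne'
    field_simp

/-- `exp (-φ)` is the limit of `(1 + φ/k)⁻ᵏ`. -/
lemma exp_neg (hφ : ∀ j, 0 ≤ φ j)
    (h : ∀ n, CompletelyMonotoneUpTo n fun j => φ (j + 1) - φ j) (n : ℕ) :
    CompletelyMonotoneUpTo n fun j => Real.exp (-φ j) := by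
  refine of_tendsto (A := fun k j => ((1 + φ j / k)⁻¹) ^ k) (fun k => pow (inv (fun j => ?_)
    (fun m => ?_) n) k) fun j => ?_
  · have := hφ j
    positivity
  · convert (h m).const_mul (inv_nonneg.2 k.cast_nonneg) using 2
    ring
  · simp only [Real.exp_neg, inv_pow]
    exact (Real.tendsto_one_add_div_pow_exp (φ j)).inv₀ (Real.exp_pos _).ne'

/-- A negative power `x ^ p` is the Laplace transform of `k_{-p}`. -/
lemma rpow_of_neg (n : ℕ) {x p : ℝ} (hx : 0 < x) (hp : p < 0) :
    CompletelyMonotoneUpTo n fun j => (x + j) ^ p := by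
  have hint : ∀ j : ℕ, IntegrableOn (fun t => Real.exp (-((x + j) * t)) * powerKernel (-p) t)
      (Ioi 0) := fun j => integrableOn_exp_mul_powerKernel (neg_pos.2 hp) (by positivity)
  convert integral hint ?_ using 2 with j
  · rw [integral_exp_mul_powerKernel (neg_pos.2 hp) (by positivity), neg_neg]
  · filter_upwards [ae_restrict_mem measurableSet_Ioi] with t ht
    have hexp : Real.exp (-t) ≤ 1 := by simpa using le_of_lt ht
    convert (geometric n (Real.exp_pos (-t)).le hexp).const_mul (mul_nonneg
      (Real.exp_pos (-(x * t))).le (powerKernel_nonneg (neg_pos.2 hp) (le_of_lt ht))) using 2 with j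
    rw [← Real.exp_nat_mul, mul_right_comm, ← Real.exp_add]
    ring_nf

lemma rpow_sub_rpow (n : ℕ) {S σ : ℝ} (hS : 0 < S) (hσ : 0 < σ) (hσ1 : σ < 1) :
    CompletelyMonotoneUpTo n fun j => (S + ((j + 1 : ℕ) : ℝ)) ^ σ - (S + j) ^ σ := by
  have hpos : ∀ j : ℕ, ∀ x ∈ Icc (0 : ℝ) 1, 0 < S + x + j := fun j x hx => by
    have := hx.1
    positivity
  have hcont : ∀ j : ℕ, ContinuousOn (fun x => σ * (S + x + j) ^ (σ - 1)) (Icc 0 1) := fun j =>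
    continuousOn_const.mul (ContinuousOn.rpow_const (by fun_prop) fun x hx =>
      Or.inl (hpos j x hx).ne')
  have hFTC : ∀ j : ℕ, (S + ((j + 1 : ℕ) : ℝ)) ^ σ - (S + j) ^ σ
      = ∫ x in Icc (0 : ℝ) 1, σ * (S + x + j) ^ (σ - 1) := fun j => by
    rw [integral_Icc_eq_integral_Ioc, ← intervalIntegral.integral_of_le zero_le_one,
      intervalIntegral.integral_eq_sub_of_hasDerivAt (f := fun x => (S + x + j) ^ σ)]
    · push_cast; ring_nf
    · intro x hx
      rw [uIcc_of_le zero_le_one] at hx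
      have hderiv : HasDerivAt (fun x : ℝ => S + x + j) 1 x :=
        ((hasDerivAt_id x).const_add S).add_const (j : ℝ)
      simpa using hderiv.rpow_const (p := σ) (Or.inl (hpos j x hx).ne')
    · exact (hcont j).intervalIntegrable_of_Icc zero_le_one
  simp only [hFTC]
  refine integral (fun j => (hcont j).integrableOn_Icc) ?_
  filter_upwards [ae_restrict_mem measurableSet_Icc] with x hx
  exact (rpow_of_neg n (add_pos_of_pos_of_nonneg hS hx.1) (sub_neg.2 hσ1)).const_mul hσ.le

end CompletelyMonotoneUpTo

/-! ### Functions with completely monotone moments -/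

section ExpNegSubstitution

lemma image_exp_neg_Ioi : (fun t : ℝ => Real.exp (-t)) '' Ioi 0 = Ioo 0 1 := by
  have h : (fun t : ℝ => Real.exp (-t)) = Real.exp ∘ Neg.neg := rfl
  rw [h, image_comp, image_neg_Ioi, neg_zero, Real.image_exp_Iio, Real.exp_zero]

lemma hasDerivWithinAt_exp_neg (s : Set ℝ) (t : ℝ) :
    HasDerivWithinAt (fun t => Real.exp (-t)) (-Real.exp (-t)) s t := by
  simpa using (hasDerivAt_neg t).exp.hasDerivWithinAt

lemma injOn_exp_neg (s : Set ℝ) : InjOn (fun t : ℝ => Real.exp (-t)) s :=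
  (Real.exp_injective.comp neg_injective).injOn

variable {E : Type*} [NormedAddCommGroup E] [NormedSpace ℝ E] (G : ℝ → E)

lemma integral_Ioo_eq_integral_exp_neg :
    ∫ x in Ioo (0 : ℝ) 1, G x = ∫ t in Ioi (0 : ℝ), Real.exp (-t) • G (Real.exp (-t)) := by
  rw [← image_exp_neg_Ioi, integral_image_eq_integral_abs_deriv_smul measurableSet_Ioi
    (fun t _ => hasDerivWithinAt_exp_neg _ t) (injOn_exp_neg _)]
  simp only [abs_neg, Real.abs_exp]

lemma integrableOn_Ioo_iff_integrableOn_exp_neg :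
    IntegrableOn G (Ioo 0 1)
      ↔ IntegrableOn (fun t => Real.exp (-t) • G (Real.exp (-t))) (Ioi 0) := by
  rw [← image_exp_neg_Ioi, integrableOn_image_iff_integrableOn_abs_deriv_smul measurableSet_Ioi
    (fun t _ => hasDerivWithinAt_exp_neg _ t) (injOn_exp_neg _)]
  simp only [abs_neg, Real.abs_exp]

end ExpNegSubstitution

section Moments

variable {g : ℝ → ℝ}

lemma integrableOn_pow_mul (hg : IntegrableOn g (Ioo 0 1)) (j : ℕ) :
    IntegrableOn (fun x => x ^ j * g x) (Ioo 0 1) := by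
  refine Integrable.bdd_mul hg (c := 1) (by fun_prop) ?_
  filter_upwards [ae_restrict_mem measurableSet_Ioo] with x hx
  rw [norm_pow, Real.norm_of_nonneg hx.1.le]
  exact pow_le_one₀ hx.1.le hx.2.le

lemma setIntegral_pow_mul_one_sub_pow_mul_nonneg (m : ℕ) (hg : IntegrableOn g (Ioo 0 1))
    (h : CompletelyMonotoneUpTo m fun j => ∫ x in Ioo (0 : ℝ) 1, x ^ j * g x) (j : ℕ) :
    0 ≤ ∫ x in Ioo (0 : ℝ) 1, x ^ j * (1 - x) ^ m * g x := by
  induction m generalizing g with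
  | zero => simpa using h j
  | succ m ih =>
    have hmul : ∀ j : ℕ, ∀ x, x ^ j * ((1 - x) * g x) = x ^ j * g x - x ^ (j + 1) * g x :=
      fun j x => by ring
    have hint : IntegrableOn (fun x => (1 - x) * g x) (Ioo 0 1) := by
      convert hg.sub (integrableOn_pow_mul hg 1) using 2 with x
      simp only [Pi.sub_apply]
      ring
    have hdiff : CompletelyMonotoneUpTo m
        fun j => ∫ x in Ioo (0 : ℝ) 1, x ^ j * ((1 - x) * g x) := by
      simp only [hmul, integral_sub (integrableOn_pow_mul hg _) (integrableOn_pow_mul hg _)]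
      exact h.2
    convert ih hint hdiff using 3
    ring

/-- Dividing through by the right-hand side, this is the product of two instances of
`1 + x < exp x` whose exponents cancel. -/
lemma pow_mul_one_sub_pow_lt {p q : ℕ} (hp : p ≠ 0) (hq : q ≠ 0) {y : ℝ} (hy : y ∈ Icc (0 : ℝ) 1)
    (hne : y ≠ p / (p + q)) :
    y ^ p * (1 - y) ^ q < (p / (p + q) : ℝ) ^ p * (1 - p / (p + q)) ^ q := by
  obtain ⟨x, hx⟩ : ∃ x : ℝ, x = p / (p + q) := ⟨_, rfl⟩
  have hx1 : 1 - x = q / (p + q) := by rw [hx]; field_simp; ring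
  have hx0 : 0 < x := by rw [hx]; positivity
  have hx1' : 0 < 1 - x := by rw [hx1]; positivity
  rw [← hx] at hne ⊢
  have hlt : ∀ {u v : ℝ}, 0 < v → u ≠ v → u / v < Real.exp (u / v - 1) := fun hv huv => by
    have := Real.add_one_lt_exp (sub_ne_zero.2 (mt (div_eq_one_iff_eq hv.ne').1 huv))
    rwa [sub_add_cancel] at this
  have hcancel : p * (y / x - 1) + q * ((1 - y) / (1 - x) - 1) = 0 := by
    rw [hx1, hx]
    field_simp
    ring
  have hprod := mul_lt_mul''
    (pow_lt_pow_left₀ (hlt hx0 hne) (div_nonneg hy.1 hx0.le) hp)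
    (pow_lt_pow_left₀ (hlt hx1' (sub_right_injective.ne hne))
      (div_nonneg (sub_nonneg.2 hy.2) hx1'.le) hq) (by have := hy.1; positivity)
    (by have := sub_nonneg.2 hy.2; positivity)
  rwa [← Real.exp_nat_mul, ← Real.exp_nat_mul, ← Real.exp_add, hcancel, Real.exp_zero, div_pow,
    div_pow, div_mul_div_comm, div_lt_one (by positivity)] at hprod

/-- The powers of `x ^ p * (1 - x) ^ q` concentrate at `p / (p + q)`. -/
lemma nonneg_div_of_completelyMonotone_moments {p q : ℕ} (hp : p ≠ 0) (hq : q ≠ 0)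
    (hg : IntegrableOn g (Ioo 0 1)) (hcont : ContinuousAt g (p / (p + q)))
    (h : ∀ m, CompletelyMonotoneUpTo m fun j => ∫ x in Ioo (0 : ℝ) 1, x ^ j * g x) :
    0 ≤ g (p / (p + q)) := by
  have hq' : (0 : ℝ) < q := by positivity
  have hmem : (p / (p + q) : ℝ) ∈ Ioo (0 : ℝ) 1 :=
    ⟨by positivity, (div_lt_one (by positivity)).2 (by linarith)⟩
  have hnonneg : ∀ x ∈ Icc (0 : ℝ) 1, 0 ≤ x ^ p * (1 - x) ^ q := fun x hx =>
    mul_nonneg (pow_nonneg hx.1 p) (pow_nonneg (sub_nonneg.2 hx.2) q)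
  have hlim := tendsto_setIntegral_pow_smul_of_unique_maximum_of_isCompact_of_integrableOn
    (c := fun x => x ^ p * (1 - x) ^ q) isCompact_Icc (by fun_prop)
    (fun y hy hne => pow_mul_one_sub_pow_lt hp hq hy hne) hnonneg
    (mul_pos (pow_pos hmem.1 p) (pow_pos (sub_pos.2 hmem.2) q))
    (by rw [interior_Icc, closure_Ioo zero_ne_one]; exact Ioo_subset_Icc_self hmem)
    ((integrableOn_Icc_iff_integrableOn_Ioo (by simp) (by simp)).2 hg) hcont.continuousWithinAt
  refine ge_of_tendsto' hlim fun n => mul_nonneg (inv_nonneg.2 (setIntegral_nonneg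
    measurableSet_Icc fun x hx => pow_nonneg (hnonneg x hx) n)) ?_
  simp only [smul_eq_mul, mul_pow, ← pow_mul]
  rw [integral_Icc_eq_integral_Ioo]
  exact setIntegral_pow_mul_one_sub_pow_mul_nonneg _ hg (h _) _

lemma nonneg_of_completelyMonotone_moments (hg : IntegrableOn g (Ioo 0 1))
    (hcont : ContinuousOn g (Ioo 0 1))
    (h : ∀ m, CompletelyMonotoneUpTo m fun j => ∫ x in Ioo (0 : ℝ) 1, x ^ j * g x) {x : ℝ}
    (hx : x ∈ Ioo (0 : ℝ) 1) : 0 ≤ g x := by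
  by_contra! hneg
  obtain ⟨r, hr, hr_neg⟩ := Rat.denseRange_cast.exists_mem_open
    (hcont.isOpen_inter_preimage isOpen_Ioo isOpen_Iio) ⟨x, hx, hneg⟩
  have hr0 : 0 < r := Rat.cast_pos.1 hr.1
  have hr1 : r < 1 := by exact_mod_cast hr.2
  lift r to ℚ≥0 using hr0.le
  have hlt : r.num < r.den := by
    rw [← NNRat.num_div_den r] at hr1
    rw [NNRat.cast_div, div_lt_one (by exact_mod_cast r.den_pos)] at hr1
    exact_mod_cast hr1
  have hr_eq : ((r : ℚ) : ℝ) = r.num / (r.num + (r.den - r.num : ℕ)) := by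
    rw [Nat.cast_sub hlt.le, add_sub_cancel]
    rw [← NNRat.cast_natCast r.num, ← NNRat.cast_natCast r.den, ← NNRat.cast_div, NNRat.num_div_den]
    norm_cast
  have hnum : r.num ≠ 0 := NNRat.num_ne_zero.2 (by exact_mod_cast hr0.ne')
  rw [hr_eq] at hr hr_neg
  exact not_lt.2 (nonneg_div_of_completelyMonotone_moments hnum (Nat.sub_ne_zero_of_lt hlt) hg
    (hcont.continuousAt (isOpen_Ioo.mem_nhds hr)) h) hr_neg

lemma nonneg_of_completelyMonotone_laplace {y : ℝ → ℝ} {S : ℝ} (hcont : ContinuousOn y (Ioi 0))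
    (hint : IntegrableOn (fun t => Real.exp (-(S * t)) * y t) (Ioi 0))
    (h : ∀ m, CompletelyMonotoneUpTo m
      fun j => ∫ t in Ioi (0 : ℝ), Real.exp (-((S + j) * t)) * y t) {t : ℝ} (ht : 0 < t) :
    0 ≤ y t := by
  have hsubst : ∀ (j : ℕ) (t : ℝ), Real.exp (-t) • (Real.exp (-t) ^ j *
      (Real.exp (-t) ^ (S - 1) * y (-Real.log (Real.exp (-t)))))
      = Real.exp (-((S + j) * t)) * y t := fun j t => by
    rw [Real.log_exp, neg_neg, ← Real.exp_mul, ← Real.exp_nat_mul, smul_eq_mul, ← mul_assoc,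
      ← mul_assoc, ← Real.exp_add, ← Real.exp_add]
    ring_nf
  have hnonneg := nonneg_of_completelyMonotone_moments
    (g := fun x => x ^ (S - 1) * y (-Real.log x)) (x := Real.exp (-t)) ?_ ?_ (fun m => ?_)
    ⟨Real.exp_pos _, Real.exp_lt_one_iff.2 (neg_lt_zero.2 ht)⟩
  · rw [Real.log_exp, neg_neg] at hnonneg
    exact nonneg_of_mul_nonneg_right hnonneg (Real.rpow_pos_of_pos (Real.exp_pos _) _)
  · rw [integrableOn_Ioo_iff_integrableOn_exp_neg]
    simpa only [pow_zero, one_mul, CharP.cast_eq_zero, add_zero] using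
      hint.congr_fun (fun t _ => by simpa using (hsubst 0 t).symm) measurableSet_Ioi
  · refine (continuousOn_id.rpow_const fun x hx => Or.inl hx.1.ne').mul (hcont.comp
      (Real.continuousOn_log.neg.mono fun x hx => hx.1.ne') fun x hx => ?_)
    exact neg_pos.2 (Real.log_neg hx.1 hx.2)
  · simp only [integral_Ioo_eq_integral_exp_neg, hsubst]
    exact h m

end Moments

/-! ### Positivity of the Mittag-Leffler kernels -/

section Positivity

variable {a α z : ℝ}

lemma integrableOn_exp_mul_cos (hz : 0 < z) (ω : ℝ) :
    IntegrableOn (fun x => Real.exp (-(z * x)) * Real.cos (ω * x)) (Ioi 0) := by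
  have hneg : (-z + ω * Complex.I : ℂ).re < 0 := by simpa
  simpa [IntegrableOn, Complex.exp_re] using (integrableOn_exp_mul_complex_Ioi hneg 0).re

lemma integral_exp_mul_cos (hz : 0 < z) (ω : ℝ) :
    ∫ x in Ioi 0, Real.exp (-(z * x)) * Real.cos (ω * x) = z / (z ^ 2 + ω ^ 2) := by
  have hneg : (-z + ω * Complex.I : ℂ).re < 0 := by simpa
  have hre := integral_re (integrableOn_exp_mul_complex_Ioi hneg 0)
  rw [integral_exp_mul_complex_Ioi hneg 0] at hre
  simpa [Complex.exp_re, Complex.div_re, Complex.normSq_apply, ← sq] using hre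

lemma integrableOn_exp_mul_one_sub_cos (hz : 0 < z) (ω : ℝ) :
    IntegrableOn (fun x => Real.exp (-(z * x)) * (1 - Real.cos (ω * x))) (Ioi 0) := by
  simpa [mul_sub, Pi.sub_def] using
    (integrableOn_exp_mul_cos hz 0).sub (integrableOn_exp_mul_cos hz ω)

lemma integral_exp_mul_one_sub_cos (hz : 0 < z) (ω : ℝ) :
    ∫ x in Ioi 0, Real.exp (-(z * x)) * (1 - Real.cos (ω * x)) = ω ^ 2 / (z * (z ^ 2 + ω ^ 2)) := by
  have h := integral_sub (integrableOn_exp_mul_cos hz 0) (integrableOn_exp_mul_cos hz ω)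
  rw [integral_exp_mul_cos hz, integral_exp_mul_cos hz] at h
  simp only [zero_mul, Real.cos_zero, ← mul_sub] at h
  rw [h]
  field_simp
  ring

lemma rpow_neg_div_one_add_mul_rpow_neg {r : ℝ} (ha : 0 < a) (hr : 0 < r) :
    r ^ (-(3 * (α / 2))) / (1 + a * r ^ (-α))
      = a⁻¹ * (√a ^ 2 / (r ^ (α / 2) * ((r ^ (α / 2)) ^ 2 + √a ^ 2))) := by
  have hcube : r ^ (-(3 * (α / 2))) = ((r ^ (α / 2)) ^ 3)⁻¹ := by
    rw [Real.rpow_neg hr.le, mul_comm, Real.rpow_mul hr.le]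
    norm_cast
  have hsq : r ^ (-α) = ((r ^ (α / 2)) ^ 2)⁻¹ := by
    rw [Real.rpow_neg hr.le, ← Real.rpow_natCast, ← Real.rpow_mul hr.le]
    norm_num
  have := Real.rpow_pos_of_pos hr (α / 2)
  rw [hcube, hsq, Real.sq_sqrt ha.le]
  field_simp

lemma mlKernel_three_mul_half_nonneg (ha : 0 < a) (hα : 0 < α) (hα2 : α < 2) {t : ℝ}
    (ht : 0 < t) : 0 ≤ mlKernel a α (3 * (α / 2)) t := by
  obtain ⟨S₁, hS₁⟩ := eventually_atTop.1 (eventually_abs_mul_rpow_neg_lt_one a hα)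
  set S := max S₁ 1
  have hS : 0 < S := lt_max_of_lt_right one_pos
  have hq : ∀ j : ℕ, |a| * (S + j) ^ (-α) < 1 := fun j =>
    hS₁ _ ((le_max_left _ _).trans (le_add_of_nonneg_right j.cast_nonneg))
  have hν : 0 < 3 * (α / 2) := by positivity
  have hσ : 0 < α / 2 := by positivity
  have hrpow : ∀ j : ℕ, 0 < (S + j) ^ (α / 2) := fun j => by positivity
  refine nonneg_of_completelyMonotone_laplace (S := S) (continuousOn_mlKernel a hα hν)
    (integrableOn_exp_mul_mlKernel hα.le hν hS (by simpa using hq 0)) (fun m => ?_) ht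
  have hmixture : ∀ j : ℕ,
      ∫ t in Ioi 0, Real.exp (-((S + j) * t)) * mlKernel a α (3 * (α / 2)) t
        = a⁻¹ * ∫ x in Ioi 0, Real.exp (-((S + j) ^ (α / 2) * x)) * (1 - Real.cos (√a * x)) :=
    fun j => by
      rw [integral_exp_mul_mlKernel hα.le hν (by positivity) (hq j),
        integral_exp_mul_one_sub_cos (hrpow j),
        rpow_neg_div_one_add_mul_rpow_neg ha (by positivity)]
  simp only [hmixture]
  refine (CompletelyMonotoneUpTo.integral
    (fun j => integrableOn_exp_mul_one_sub_cos (hrpow j) √a) ?_).const_mul (inv_nonneg.2 ha.le)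
  filter_upwards [ae_restrict_mem measurableSet_Ioi] with x hx
  have hexp := CompletelyMonotoneUpTo.exp_neg (φ := fun j => x * (S + j) ^ (α / 2))
    (fun j => mul_nonneg (le_of_lt hx) (hrpow j).le) (fun n => ?_) m
  · simpa only [mul_comm] using hexp.const_mul (sub_nonneg.2 (Real.cos_le_one (√a * x)))
  · simpa only [mul_sub] using (CompletelyMonotoneUpTo.rpow_sub_rpow n hS hσ
      (by linarith)).const_mul (le_of_lt hx)

/-- `e_{α+δ} = e_{3α/2} * k_{δ-α/2}` inherits the sign of `e_{3α/2}`. -/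
lemma mlKernel_nonneg {δ t : ℝ} (ha : 0 < a) (hα : 0 < α) (hα2 : α < 2) (hδ : α / 2 ≤ δ)
    (ht : 0 < t) : 0 ≤ mlKernel a α (α + δ) t := by
  obtain rfl | hlt := hδ.eq_or_lt
  · convert mlKernel_three_mul_half_nonneg ha hα hα2 ht using 2
    ring
  · rw [show α + δ = 3 * (α / 2) + (δ - α / 2) by ring, ← causalConv_mlKernel_powerKernel a hα
      (by positivity) (sub_pos.2 hlt) ht, causalConv_eq_setIntegral ht.le]
    exact setIntegral_nonneg measurableSet_Ioo fun s hs =>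
      mul_nonneg (mlKernel_three_mul_half_nonneg ha hα hα2 (sub_pos.2 hs.2))
        (powerKernel_nonneg (sub_pos.2 hlt) hs.1.le)

end Positivity

/-! ### Integrals along vertical lines -/

section VerticalLines

variable {F : ℂ → ℂ} {G : ℝ → ℝ} {x₁ x₂ : ℝ}

lemma integral_vertical_sub_integral_vertical (R : ℝ)
    (hF : DifferentiableOn ℂ F {s | s.re ∈ uIcc x₁ x₂}) :
    (∫ y in (-R)..R, F (x₂ + y * Complex.I)) - ∫ y in (-R)..R, F (x₁ + y * Complex.I)
      = Complex.I * ((∫ x in x₁..x₂, F (x + (-R : ℝ) * Complex.I))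
        - ∫ x in x₁..x₂, F (x + R * Complex.I)) := by
  have hrect := Complex.integral_boundary_rect_eq_zero_of_differentiableOn F
    (x₁ + (-R : ℝ) * Complex.I) (x₂ + R * Complex.I) (hF.mono fun s hs => by simpa using hs.1)
  simp only [Complex.add_re, Complex.ofReal_re, Complex.mul_re, Complex.I_re, mul_zero,
    Complex.ofReal_im, Complex.I_im, mul_one, sub_self, add_zero, Complex.add_im, Complex.mul_im,
    zero_add, smul_eq_mul] at hrect
  linear_combination (-Complex.I) * hrect + ((∫ y in (-R)..R, F (x₂ + y * Complex.I))
    - ∫ y in (-R)..R, F (x₁ + y * Complex.I)) * Complex.I_mul_I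

lemma tendsto_integral_horizontal {l : Filter ℝ} (hG : Tendsto G l (𝓝 0))
    (hbound : ∀ᶠ y : ℝ in l, ∀ x : ℝ, x ∈ uIcc x₁ x₂ → ‖F (x + y * Complex.I)‖ ≤ G y) :
    Tendsto (fun y : ℝ => ∫ x in x₁..x₂, F (x + y * Complex.I)) l (𝓝 0) := by
  have hlim : Tendsto (fun y => G y * |x₂ - x₁|) l (𝓝 0) := by simpa using hG.mul_const |x₂ - x₁|
  refine squeeze_zero_norm' ?_ hlim
  filter_upwards [hbound] with y hy
  exact intervalIntegral.norm_integral_le_of_norm_le_const fun x hx =>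
    hy x (uIoc_subset_uIcc hx)

lemma integrable_vertical {x : ℝ} (hF : DifferentiableOn ℂ F {s | s.re ∈ uIcc x₁ x₂})
    (hx : x ∈ uIcc x₁ x₂) (hG : Integrable G)
    (hbound : ∀ y : ℝ, y ≠ 0 → ‖F (x + y * Complex.I)‖ ≤ G y) :
    Integrable fun y : ℝ => F (x + y * Complex.I) := by
  refine hG.mono' (hF.continuousOn.comp_continuous (by fun_prop)
    fun y => by simpa using hx).aestronglyMeasurable ?_
  filter_upwards [Measure.ae_ne volume (0 : ℝ)] with y hy using hbound y hy

/-- Cauchy's theorem on large rectangles. -/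
lemma integral_vertical_eq_integral_vertical
    (hF : DifferentiableOn ℂ F {s | s.re ∈ uIcc x₁ x₂}) (hG : Integrable G)
    (hG0 : Tendsto G (cocompact ℝ) (𝓝 0))
    (hbound : ∀ x : ℝ, x ∈ uIcc x₁ x₂ → ∀ y : ℝ, y ≠ 0 → ‖F (x + y * Complex.I)‖ ≤ G y) :
    ∫ y : ℝ, F (x₁ + y * Complex.I) = ∫ y : ℝ, F (x₂ + y * Complex.I) := by
  have hvert : ∀ x : ℝ, x ∈ uIcc x₁ x₂ →
      Tendsto (fun R : ℝ => ∫ y in (-R)..R, F (x + y * Complex.I)) atTop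
        (𝓝 (∫ y : ℝ, F (x + y * Complex.I))) := fun x hx =>
    intervalIntegral_tendsto_integral (integrable_vertical hF hx hG (hbound x hx))
      tendsto_neg_atTop_atBot tendsto_id
  have htop : Tendsto (fun R : ℝ => ∫ x in x₁..x₂, F (x + R * Complex.I)) atTop (𝓝 0) :=
    tendsto_integral_horizontal (hG0.mono_left atTop_le_cocompact)
      ((eventually_ne_atTop 0).mono fun y hy x hx => hbound x hx y hy)
  have hbot : Tendsto (fun R : ℝ => ∫ x in x₁..x₂, F (x + R * Complex.I)) atBot (𝓝 0) :=
    tendsto_integral_horizontal (hG0.mono_left atBot_le_cocompact)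
      ((eventually_ne_atBot 0).mono fun y hy x hx => hbound x hx y hy)
  have hdiff := (hvert x₂ right_mem_uIcc).sub (hvert x₁ left_mem_uIcc)
  simp only [integral_vertical_sub_integral_vertical _ hF] at hdiff
  have hzero := ((hbot.comp tendsto_neg_atTop_atBot).sub htop).const_mul Complex.I
  rw [sub_zero, mul_zero] at hzero
  exact (sub_eq_zero.1 (tendsto_nhds_unique hdiff hzero)).symm

lemma norm_cexp_mul_vertical (t x y : ℝ) (z : ℂ) :
    ‖Complex.exp (t * (x + y * Complex.I)) * z‖ = Real.exp (t * x) * ‖z‖ := by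
  rw [norm_mul, Complex.norm_exp]
  simp

lemma norm_integral_cexp_mul_vertical_le {H : ℂ → ℂ} {t x : ℝ} (ht : 0 ≤ t) (hx : 0 < x)
    (hH : DifferentiableOn ℂ H {s | 0 < s.re}) (hG : Integrable G)
    (hG0 : Tendsto G (cocompact ℝ) (𝓝 0))
    (hbound : ∀ x : ℝ, 0 < x → ∀ y : ℝ, y ≠ 0 → ‖H (x + y * Complex.I)‖ ≤ G y) :
    ‖∫ y : ℝ, Complex.exp (t * (x + y * Complex.I)) * H (x + y * Complex.I)‖ ≤ ∫ y, G y := by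
  have hle : ∀ ε ∈ Ioc 0 x,
      ‖∫ y : ℝ, Complex.exp (t * (x + y * Complex.I)) * H (x + y * Complex.I)‖
        ≤ Real.exp (t * ε) * ∫ y, G y := fun ε hε => by
    have hpos : ∀ u ∈ uIcc ε x, 0 < u := fun u hu => hε.1.trans_le (uIcc_of_le hε.2 ▸ hu).1
    have hexp : Differentiable ℂ fun s => Complex.exp (t * s) := by fun_prop
    rw [← integral_vertical_eq_integral_vertical (x₁ := ε)
      (F := fun s => Complex.exp (t * s) * H s) (G := fun y => Real.exp (t * x) * G y)
      (hexp.differentiableOn.mul (hH.mono fun s hs => hpos _ hs)) (hG.const_mul _)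
      (by simpa using hG0.const_mul (Real.exp (t * x))) fun u hu y hy => ?_,
      ← integral_const_mul]
    · refine norm_integral_le_of_norm_le (hG.const_mul _) ?_
      filter_upwards [Measure.ae_ne volume (0 : ℝ)] with y hy
      rw [norm_cexp_mul_vertical]
      gcongr
      exact hbound ε hε.1 y hy
    · have hux : u ≤ x := (uIcc_of_le hε.2 ▸ hu).2
      rw [norm_cexp_mul_vertical]
      gcongr
      exact hbound u (hpos u hu) y hy
  have hlim : Tendsto (fun ε : ℝ => Real.exp (t * ε) * ∫ y, G y) (𝓝[>] 0) (𝓝 (∫ y, G y)) := by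
    have hcont : Continuous fun ε : ℝ => Real.exp (t * ε) * ∫ y, G y := by fun_prop
    simpa using (hcont.tendsto 0).mono_left nhdsWithin_le_nhds
  exact ge_of_tendsto hlim (mem_of_superset (Ioc_mem_nhdsGT hx) hle)

lemma ofReal_exp_neg_cpow (t : ℝ) (s : ℂ) : (Real.exp (-t) : ℂ) ^ s = Complex.exp (-(s * t)) := by
  rw [Complex.cpow_def_of_ne_zero (by exact_mod_cast (Real.exp_pos _).ne'),
    ← Complex.ofReal_log (Real.exp_pos _).le, Real.log_exp]
  push_cast; ring_nf

/-- The function on `(0, ∞)` whose Mellin transform is the Laplace transform of `K`, by the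
substitution `x = exp (-t)`. -/
noncomputable def compNegLog (K : ℝ → ℝ) : ℝ → ℂ :=
  (Ioo 0 1).indicator fun x => (K (-Real.log x) : ℂ)

lemma indicator_cpow_smul_compNegLog (K : ℝ → ℝ) (s : ℂ) :
    (Ioi (0 : ℝ)).indicator (fun x : ℝ => (x : ℂ) ^ (s - 1) • compNegLog K x)
      = (Ioo (0 : ℝ) 1).indicator fun x => (x : ℂ) ^ (s - 1) • (K (-Real.log x) : ℂ) := by
  simp only [compNegLog, ← indicator_smul]
  rw [indicator_indicator, inter_eq_right.2 Ioo_subset_Ioi_self]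

lemma exp_neg_smul_cpow_smul (K : ℝ → ℝ) (s : ℂ) (t : ℝ) :
    Real.exp (-t) • ((Real.exp (-t) : ℂ) ^ (s - 1) • (K (-Real.log (Real.exp (-t))) : ℂ))
      = Complex.exp (-(s * t)) * K t := by
  rw [ofReal_exp_neg_cpow, Real.log_exp, neg_neg, Complex.real_smul, Complex.ofReal_exp,
    smul_eq_mul, ← mul_assoc, ← Complex.exp_add]
  push_cast; ring_nf

lemma mellin_compNegLog (K : ℝ → ℝ) : mellin (compNegLog K) = laplace K := by
  ext s
  rw [mellin, ← integral_indicator measurableSet_Ioi, indicator_cpow_smul_compNegLog,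
    integral_indicator measurableSet_Ioo, integral_Ioo_eq_integral_exp_neg]
  simp only [exp_neg_smul_cpow_smul, laplace]

lemma mellinConvergent_compNegLog {K : ℝ → ℝ} {x : ℝ}
    (hint : IntegrableOn (fun t => Real.exp (-(x * t)) * K t) (Ioi 0)) :
    MellinConvergent (compNegLog K) x := by
  rw [MellinConvergent, ← integrable_indicator_iff measurableSet_Ioi,
    indicator_cpow_smul_compNegLog, integrable_indicator_iff measurableSet_Ioo,
    integrableOn_Ioo_iff_integrableOn_exp_neg]
  simp only [exp_neg_smul_cpow_smul]
  exact_mod_cast hint.ofReal (𝕜 := ℂ)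

lemma ofReal_eq_integral_cexp_mul_laplace {K : ℝ → ℝ} {x t : ℝ} (ht : 0 < t)
    (hK : ContinuousAt K t) (hint : IntegrableOn (fun t => Real.exp (-(x * t)) * K t) (Ioi 0))
    (hlap : Integrable fun y : ℝ => laplace K (x + y * Complex.I)) :
    (K t : ℂ) = (1 / (2 * Real.pi)) • ∫ y : ℝ,
      Complex.exp (t * (x + y * Complex.I)) * laplace K (x + y * Complex.I) := by
  have hmem : Real.exp (-t) ∈ Ioo (0 : ℝ) 1 :=
    ⟨Real.exp_pos _, Real.exp_lt_one_iff.2 (neg_lt_zero.2 ht)⟩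
  have hcont : ContinuousAt (compNegLog K) (Real.exp (-t)) := by
    have hlog : ContinuousAt (fun x : ℝ => (K (-Real.log x) : ℂ)) (Real.exp (-t)) := by
      refine Complex.continuous_ofReal.continuousAt.comp (ContinuousAt.comp ?_
        (Real.continuousAt_log hmem.1.ne').neg)
      simpa using hK
    refine hlog.congr ?_
    filter_upwards [isOpen_Ioo.mem_nhds hmem] with u hu
    exact (indicator_of_mem hu fun x : ℝ => (K (-Real.log x) : ℂ)).symm
  have hinv := mellinInv_mellin_eq x (compNegLog K) hmem.1 (mellinConvergent_compNegLog hint)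
    (by rwa [mellin_compNegLog]) hcont
  rw [mellin_compNegLog, mellinInv] at hinv
  simp only [ofReal_exp_neg_cpow, smul_eq_mul, mul_neg, neg_neg, mul_comm _ (t : ℂ)] at hinv
  rw [hinv]
  simp [compNegLog, indicator_of_mem hmem]

end VerticalLines

/-! ### Decay of the Mittag-Leffler kernels -/

/-- A majorant along vertical lines, integrable over the line for `κ > 0`. -/
noncomputable def verticalMajorant (κ y : ℝ) : ℝ := min (|y| ^ (κ - 1)) (|y| ^ (-κ - 1))

section VerticalMajorant

variable {κ y : ℝ}

lemma verticalMajorant_nonneg (κ y : ℝ) : 0 ≤ verticalMajorant κ y := by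
  unfold verticalMajorant; positivity

lemma verticalMajorant_neg (κ y : ℝ) : verticalMajorant κ (-y) = verticalMajorant κ y := by
  simp [verticalMajorant]

lemma integrableOn_Ioi_verticalMajorant (hκ : 0 < κ) :
    IntegrableOn (verticalMajorant κ) (Ioi 0) := by
  have hmeas : Measurable (verticalMajorant κ) := by unfold verticalMajorant; fun_prop
  rw [← Ioc_union_Ioi_eq_Ioi (zero_le_one' ℝ)]
  refine IntegrableOn.union ?_ ?_
  · have hpow : IntegrableOn (fun y : ℝ => y ^ (κ - 1)) (Ioc 0 1) :=
      (intervalIntegrable_iff_integrableOn_Ioc_of_le zero_le_one).1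
        (intervalIntegral.intervalIntegrable_rpow' (by linarith))
    refine hpow.mono' hmeas.aestronglyMeasurable ?_
    filter_upwards [ae_restrict_mem measurableSet_Ioc] with y hy
    rw [Real.norm_of_nonneg (verticalMajorant_nonneg κ y), verticalMajorant,
      abs_of_pos hy.1]
    exact min_le_left _ _
  · have hpow : IntegrableOn (fun y : ℝ => y ^ (-κ - 1)) (Ioi 1) :=
      integrableOn_Ioi_rpow_of_lt (by linarith) one_pos
    refine hpow.mono' hmeas.aestronglyMeasurable ?_
    filter_upwards [ae_restrict_mem measurableSet_Ioi] with y (hy : 1 < y)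
    rw [Real.norm_of_nonneg (verticalMajorant_nonneg κ y), verticalMajorant,
      abs_of_pos (zero_lt_one.trans hy)]
    exact min_le_right _ _

lemma integrable_verticalMajorant (hκ : 0 < κ) : Integrable (verticalMajorant κ) := by
  have hpos := integrableOn_Ioi_verticalMajorant hκ
  have hneg : IntegrableOn (verticalMajorant κ) (Iic 0) := by
    rw [integrableOn_Iic_iff_integrableOn_Iio]
    simpa only [verticalMajorant_neg] using
      IntegrableOn.comp_neg_Iio (c := (0 : ℝ)) (f := verticalMajorant κ) (by simpa using hpos)
  rw [← integrableOn_univ, ← Iic_union_Ioi (a := (0 : ℝ))]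
  exact hneg.union hpos

lemma tendsto_verticalMajorant (hκ : 0 < κ) :
    Tendsto (verticalMajorant κ) (cocompact ℝ) (𝓝 0) := by
  refine squeeze_zero (verticalMajorant_nonneg κ) (fun y => min_le_right _ _) ?_
  have hpow := (tendsto_rpow_neg_atTop (y := κ + 1) (by linarith)).comp
    (tendsto_norm_cocompact_atTop (E := ℝ))
  refine hpow.congr fun y => ?_
  rw [Function.comp_apply, neg_add', Real.norm_eq_abs]

lemma verticalMajorant_anti {ρ : ℝ} (hκ : 0 ≤ κ) (hκ1 : κ ≤ 1) (hy : y ≠ 0) (hyρ : |y| ≤ ρ) :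
    verticalMajorant κ ρ ≤ verticalMajorant κ y := by
  rw [verticalMajorant, abs_of_nonneg ((abs_nonneg y).trans hyρ)]
  exact min_le_min
    (Real.rpow_le_rpow_of_nonpos (abs_pos.2 hy) hyρ (by linarith))
    (Real.rpow_le_rpow_of_nonpos (abs_pos.2 hy) hyρ (by linarith))

lemma rpow_div_sq_le_verticalMajorant {a α θ ρ : ℝ} (ha : 0 < a) (hκ : 0 ≤ κ) (hκθ : κ ≤ θ)
    (hκα : κ ≤ 2 * α - θ) (hρ : 0 < ρ) :
    ρ ^ (θ - 1) / (ρ ^ α + a) ^ 2 ≤ ((a ^ 2)⁻¹ + 1) * verticalMajorant κ ρ := by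
  have hpow : 0 < ρ ^ α := Real.rpow_pos_of_pos hρ α
  have hmaj := verticalMajorant_nonneg κ ρ
  have hinv : 0 < (a ^ 2)⁻¹ := by positivity
  rcases le_total ρ 1 with hρ1 | hρ1
  · have hmin : ρ ^ (θ - 1) ≤ verticalMajorant κ ρ := by
      rw [verticalMajorant, abs_of_pos hρ]
      exact le_min (Real.rpow_le_rpow_of_exponent_ge hρ hρ1 (by linarith))
        (Real.rpow_le_rpow_of_exponent_ge hρ hρ1 (by linarith))
    calc ρ ^ (θ - 1) / (ρ ^ α + a) ^ 2 ≤ verticalMajorant κ ρ / a ^ 2 := by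
          gcongr; linarith
      _ = (a ^ 2)⁻¹ * verticalMajorant κ ρ := by rw [div_eq_mul_inv, mul_comm]
      _ ≤ ((a ^ 2)⁻¹ + 1) * verticalMajorant κ ρ := by gcongr; linarith
  · have hmin : ρ ^ (θ - 1 - α * 2) ≤ verticalMajorant κ ρ := by
      rw [verticalMajorant, abs_of_pos hρ]
      exact le_min (Real.rpow_le_rpow_of_exponent_le hρ1 (by linarith))
        (Real.rpow_le_rpow_of_exponent_le hρ1 (by linarith))
    calc ρ ^ (θ - 1) / (ρ ^ α + a) ^ 2 ≤ ρ ^ (θ - 1) / (ρ ^ α) ^ 2 := by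
          gcongr; linarith
      _ = ρ ^ (θ - 1 - α * 2) := by
          rw [Real.rpow_sub hρ (θ - 1), Real.rpow_mul hρ.le, Real.rpow_two]
      _ ≤ verticalMajorant κ ρ := hmin
      _ ≤ ((a ^ 2)⁻¹ + 1) * verticalMajorant κ ρ := le_mul_of_one_le_left hmaj (by linarith)

lemma exists_integrable_rpow_norm_div_sq_le {a α θ : ℝ} (ha : 0 < a) (hθ : 0 < θ)
    (hθα : θ < 2 * α) :
    ∃ G : ℝ → ℝ, Integrable G ∧ Tendsto G (cocompact ℝ) (𝓝 0) ∧
      ∀ s : ℂ, s.im ≠ 0 → ‖s‖ ^ (θ - 1) / (‖s‖ ^ α + a) ^ 2 ≤ G s.im := by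
  obtain ⟨κ, hκ, hκ1, hκθ, hκα⟩ : ∃ κ : ℝ, 0 < κ ∧ κ ≤ 1 ∧ κ ≤ θ ∧ κ ≤ 2 * α - θ :=
    ⟨min 1 (min θ (2 * α - θ)), lt_min one_pos (lt_min hθ (by linarith)), min_le_left _ _,
      (min_le_right _ _).trans (min_le_left _ _), (min_le_right _ _).trans (min_le_right _ _)⟩
  refine ⟨fun y => ((a ^ 2)⁻¹ + 1) * verticalMajorant κ y,
    (integrable_verticalMajorant hκ).const_mul _,
    by simpa using (tendsto_verticalMajorant hκ).const_mul ((a ^ 2)⁻¹ + 1), fun s hs => ?_⟩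
  refine (rpow_div_sq_le_verticalMajorant ha hκ.le hκθ hκα
    (norm_pos_iff.2 fun h => hs (by simp [h]))).trans ?_
  exact mul_le_mul_of_nonneg_left
    (verticalMajorant_anti hκ.le hκ1 hs (Complex.abs_im_le_norm s)) (by positivity)

end VerticalMajorant

section Sector

variable {s : ℂ}

lemma cos_mul_rpow_norm_le_re_cpow {x : ℝ} (hs : 0 ≤ s.re) (hx : |x| ≤ 2) :
    Real.cos (|x| * (Real.pi / 2)) * ‖s‖ ^ x ≤ (s ^ (x : ℂ)).re := by
  have hcos : Real.cos (|x| * (Real.pi / 2)) ≤ Real.cos (s.arg * x) := by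
    rw [← Real.cos_abs (s.arg * x), abs_mul, mul_comm |s.arg|]
    refine Real.cos_le_cos_of_nonneg_of_le_pi (by positivity) ?_ ?_
    · nlinarith [Real.pi_pos]
    · exact mul_le_mul_of_nonneg_left (Complex.abs_arg_le_pi_div_two_iff.2 hs) (abs_nonneg x)
  rw [Complex.cpow_ofReal_re, mul_comm]
  gcongr

/-- Factoring out `s ^ (α / 2)` leaves `s ^ (α / 2) + a * s ^ (-α / 2)`, whose two terms lie in the
sector of half-opening `α * π / 4`. -/
lemma cos_mul_le_norm_cpow_add {a α : ℝ} (ha : 0 ≤ a) (hα : 0 ≤ α) (hα4 : α ≤ 4)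
    (hs : 0 < s.re) :
    Real.cos (α / 2 * (Real.pi / 2)) * (‖s‖ ^ α + a) ≤ ‖s ^ (α : ℂ) + a‖ := by
  have hs0 : s ≠ 0 := fun h => by simp [h] at hs
  have hnorm : 0 < ‖s‖ := norm_pos_iff.2 hs0
  have habs : |α / 2| = α / 2 := abs_of_nonneg (by linarith)
  have hfactor : s ^ (α : ℂ) + a
      = s ^ ((α / 2 : ℝ) : ℂ) * (s ^ ((α / 2 : ℝ) : ℂ) + a * s ^ ((-(α / 2) : ℝ) : ℂ)) := by
    rw [mul_add, mul_left_comm, ← Complex.cpow_add _ _ hs0, ← Complex.cpow_add _ _ hs0,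
      ← Complex.ofReal_add, ← Complex.ofReal_add, add_halves, add_neg_cancel]
    simp
  have hre : Real.cos (α / 2 * (Real.pi / 2)) * (‖s‖ ^ (α / 2) + a * ‖s‖ ^ (-(α / 2)))
      ≤ (s ^ ((α / 2 : ℝ) : ℂ) + a * s ^ ((-(α / 2) : ℝ) : ℂ)).re := by
    have hpos := cos_mul_rpow_norm_le_re_cpow (x := α / 2) hs.le (by linarith)
    have hneg := cos_mul_rpow_norm_le_re_cpow (x := -(α / 2)) hs.le (by rw [abs_neg]; linarith)
    rw [habs] at hpos
    rw [abs_neg, habs] at hneg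
    rw [Complex.add_re, Complex.re_ofReal_mul]
    linarith [mul_le_mul_of_nonneg_left hneg ha]
  calc Real.cos (α / 2 * (Real.pi / 2)) * (‖s‖ ^ α + a)
      = ‖s‖ ^ (α / 2) *
          (Real.cos (α / 2 * (Real.pi / 2)) * (‖s‖ ^ (α / 2) + a * ‖s‖ ^ (-(α / 2)))) := by
        rw [mul_left_comm, mul_add (‖s‖ ^ (α / 2)), mul_left_comm _ a, ← Real.rpow_add hnorm,
          ← Real.rpow_add hnorm, add_halves, add_neg_cancel, Real.rpow_zero, mul_one]
    _ ≤ ‖s‖ ^ (α / 2) * ‖s ^ ((α / 2 : ℝ) : ℂ) + a * s ^ ((-(α / 2) : ℝ) : ℂ)‖ := by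
        gcongr
        exact hre.trans (Complex.re_le_norm _)
    _ = ‖s ^ (α : ℂ) + a‖ := by rw [hfactor, norm_mul, Complex.norm_cpow_real]

end Sector

/-- The Laplace transform of `t * mlKernel a α ν t`, which is `-(d/ds) (s ^ (α-ν) / (s ^ α + a))`,
continued to the whole right half-plane. -/
noncomputable def mlTransform (a α ν : ℝ) (s : ℂ) : ℂ :=
  (ν * s ^ ((2 * α - ν - 1 : ℝ) : ℂ) - (α - ν : ℝ) * (a * s ^ ((α - ν - 1 : ℝ) : ℂ))) /
    (s ^ (α : ℂ) + a) ^ 2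

section MittagLefflerDecay

variable {a α ν : ℝ} {s : ℂ}

lemma cos_pos_of_lt_two (hα : 0 < α) (hα2 : α < 2) : 0 < Real.cos (α / 2 * (Real.pi / 2)) := by
  refine Real.cos_pos_of_mem_Ioo ⟨?_, ?_⟩ <;> nlinarith [Real.pi_pos]

lemma differentiableOn_mlTransform (ha : 0 < a) (hα : 0 < α) (hα2 : α < 2) :
    DifferentiableOn ℂ (mlTransform a α ν) {s | 0 < s.re} := by
  intro s hs
  have hden : s ^ (α : ℂ) + a ≠ 0 := norm_pos_iff.1 <|
    (mul_pos (cos_pos_of_lt_two hα hα2) (by positivity)).trans_le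
      (cos_mul_le_norm_cpow_add ha.le hα.le (by linarith) hs)
  have hcpow : ∀ z : ℂ, DifferentiableAt ℂ (fun s : ℂ => s ^ z) s := fun z =>
    differentiableAt_id.cpow_const (Or.inl hs)
  exact ((((hcpow _).const_mul _).sub (((hcpow _).const_mul _).const_mul _)).div
    (((hcpow _).add_const _).pow 2) (pow_ne_zero 2 hden)).differentiableWithinAt

lemma norm_mlTransform_le (ha : 0 < a) (hα : 0 < α) (hα2 : α < 2) (hν : 0 ≤ ν) (hνα : ν ≤ α)
    (hs : 0 < s.re) :
    ‖mlTransform a α ν s‖ ≤ (Real.cos (α / 2 * (Real.pi / 2)) ^ 2)⁻¹ *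
      (ν * (‖s‖ ^ (2 * α - ν - 1) / (‖s‖ ^ α + a) ^ 2)
        + (α - ν) * (a * (‖s‖ ^ (α - ν - 1) / (‖s‖ ^ α + a) ^ 2))) := by
  have hcos := cos_pos_of_lt_two hα hα2
  have hnum : ‖ν * s ^ ((2 * α - ν - 1 : ℝ) : ℂ)
      - (α - ν : ℝ) * (a * s ^ ((α - ν - 1 : ℝ) : ℂ))‖
      ≤ ν * ‖s‖ ^ (2 * α - ν - 1) + (α - ν) * (a * ‖s‖ ^ (α - ν - 1)) := by
    refine (norm_sub_le _ _).trans_eq ?_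
    simp only [norm_mul, Complex.norm_cpow_real, Complex.norm_real]
    rw [Real.norm_of_nonneg hν, Real.norm_of_nonneg ha.le, Real.norm_of_nonneg (by linarith)]
  calc ‖mlTransform a α ν s‖
      ≤ (ν * ‖s‖ ^ (2 * α - ν - 1) + (α - ν) * (a * ‖s‖ ^ (α - ν - 1))) /
          (Real.cos (α / 2 * (Real.pi / 2)) * (‖s‖ ^ α + a)) ^ 2 := by
        rw [mlTransform, norm_div, norm_pow]
        gcongr
        exact cos_mul_le_norm_cpow_add ha.le hα.le (by linarith) hs
    _ = _ := by
        rw [mul_pow]; field_simp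

lemma exists_integrable_norm_mlTransform_le (ha : 0 < a) (hα : 0 < α) (hα2 : α < 2) (hν : 0 < ν)
    (hνα : ν ≤ α) :
    ∃ G : ℝ → ℝ, Integrable G ∧ Tendsto G (cocompact ℝ) (𝓝 0) ∧
      ∀ s : ℂ, 0 < s.re → s.im ≠ 0 → ‖mlTransform a α ν s‖ ≤ G s.im := by
  obtain ⟨G₁, hG₁, hG₁0, hle₁⟩ := exists_integrable_rpow_norm_div_sq_le ha
    (θ := 2 * α - ν) (α := α) (by linarith) (by linarith)
  obtain ⟨G₂, hG₂, hG₂0, hle₂⟩ : ∃ G : ℝ → ℝ, Integrable G ∧ Tendsto G (cocompact ℝ) (𝓝 0) ∧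
      ∀ s : ℂ, s.im ≠ 0 →
        (α - ν) * (a * (‖s‖ ^ (α - ν - 1) / (‖s‖ ^ α + a) ^ 2)) ≤ (α - ν) * (a * G s.im) := by
    rcases hνα.eq_or_lt with rfl | hlt
    · exact ⟨0, integrable_zero _ _ _, tendsto_const_nhds, fun s _ => by simp⟩
    · obtain ⟨G, hG, hG0, hle⟩ := exists_integrable_rpow_norm_div_sq_le ha
        (θ := α - ν) (α := α) (by linarith) (by linarith)
      refine ⟨G, hG, hG0, fun s hs => ?_⟩
      have := hle s hs
      gcongr
  refine ⟨fun y => (Real.cos (α / 2 * (Real.pi / 2)) ^ 2)⁻¹ *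
      (ν * G₁ y + (α - ν) * (a * G₂ y)),
    ((hG₁.const_mul _).add ((hG₂.const_mul _).const_mul _)).const_mul _, ?_, fun s hs hs' => ?_⟩
  · simpa using ((hG₁0.const_mul ν).add ((hG₂0.const_mul a).const_mul (α - ν))).const_mul
      (Real.cos (α / 2 * (Real.pi / 2)) ^ 2)⁻¹
  · refine (norm_mlTransform_le ha hα hα2 hν.le hνα hs).trans ?_
    beta_reduce
    gcongr ?_ * (ν * ?_ + ?_)
    exacts [hle₁ s hs', hle₂ s hs']

lemma mul_mlKernel_eq_tsum (hα : 0 ≤ α) (hν : 0 < ν) {t : ℝ} (ht : 0 < t) :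
    t * mlKernel a α ν t
      = ∑' n : ℕ, (-a) ^ n * (α * n + ν) * powerKernel (α * n + (ν + 1)) t := by
  rw [mlKernel, ← tsum_mul_left]
  congr 1 with n
  rw [mul_left_comm, mul_powerKernel (by positivity) ht, ← add_assoc, mul_assoc]

lemma tsum_linear_mul_geometric {q : ℂ} (hq : ‖q‖ < 1) (x y : ℂ) :
    ∑' n : ℕ, (x * n + y) * q ^ n = x * (q / (1 - q) ^ 2) + y * (1 - q)⁻¹ := by
  have hlin : Summable fun n : ℕ => (n : ℂ) * q ^ n := by
    simpa using summable_pow_mul_geometric_of_norm_lt_one 1 hq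
  simp only [add_mul, mul_assoc]
  rw [(hlin.mul_left x).tsum_add ((summable_geometric_of_norm_lt_one hq).mul_left y),
    tsum_mul_left, tsum_mul_left, tsum_coe_mul_geometric_of_norm_lt_one hq,
    tsum_geometric_of_norm_lt_one hq]

lemma mlTransform_eq (hs : s ≠ 0) (hq : ‖-(a * s ^ (-(α : ℂ)))‖ < 1) :
    mlTransform a α ν s = s ^ (-((ν + 1 : ℝ) : ℂ)) *
      (α * (-(a * s ^ (-(α : ℂ))) / (1 - -(a * s ^ (-(α : ℂ)))) ^ 2)
        + ν * (1 - -(a * s ^ (-(α : ℂ))))⁻¹) := by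
  set q : ℂ := -(a * s ^ (-(α : ℂ))) with hq_def
  have hpow : s ^ (α : ℂ) ≠ 0 := by simp [Complex.cpow_eq_zero_iff, hs]
  have hq1 : 1 - q ≠ 0 := sub_ne_zero.2 fun h => by simp [← h] at hq
  have hden : s ^ (α : ℂ) + a = s ^ (α : ℂ) * (1 - q) := by
    rw [hq_def, Complex.cpow_neg]; field_simp; ring
  have hlead : s ^ ((2 * α - ν - 1 : ℝ) : ℂ) = (s ^ (α : ℂ)) ^ 2 * s ^ (-((ν + 1 : ℝ) : ℂ)) := by
    rw [← Complex.cpow_nat_mul, ← Complex.cpow_add _ _ hs]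
    congr 1; push_cast; ring
  have hlow : a * s ^ ((α - ν - 1 : ℝ) : ℂ)
      = -((s ^ (α : ℂ)) ^ 2 * s ^ (-((ν + 1 : ℝ) : ℂ)) * q) := by
    have : s ^ ((α - ν - 1 : ℝ) : ℂ)
        = (s ^ (α : ℂ)) ^ 2 * s ^ (-((ν + 1 : ℝ) : ℂ)) * s ^ (-(α : ℂ)) := by
      rw [← Complex.cpow_nat_mul, ← Complex.cpow_add _ _ hs, ← Complex.cpow_add _ _ hs]
      congr 1; push_cast; ring
    rw [this, hq_def]; ring
  rw [mlTransform, hden, hlead, hlow]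
  push_cast
  field_simp
  ring

lemma laplace_mul_mlKernel (hα : 0 ≤ α) (hν : 0 < ν) (hs : 0 < s.re)
    (hq : |a| * s.re ^ (-α) < 1) :
    laplace (fun t => t * mlKernel a α ν t) s = mlTransform a α ν s := by
  have hq' := norm_mul_cpow_neg_lt_one hα hs hq
  have hsum : Summable fun n : ℕ => |α * n + ν| * (|a| * s.re ^ (-α)) ^ n := by
    have hnorm : ‖|a| * s.re ^ (-α)‖ < 1 := by rwa [Real.norm_of_nonneg (by positivity)]
    have hlin : Summable fun n : ℕ => (n : ℝ) * (|a| * s.re ^ (-α)) ^ n := by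
      simpa using summable_pow_mul_geometric_of_norm_lt_one 1 hnorm
    refine ((hlin.mul_left α).add
      ((summable_geometric_of_norm_lt_one hnorm).mul_left ν)).congr fun n => ?_
    rw [abs_of_nonneg (show 0 ≤ α * n + ν by positivity)]; ring
  rw [laplace_congr (fun t ht => mul_mlKernel_eq_tsum hα hν ht) s,
    laplace_tsum_pow_mul_powerKernel hα (by linarith) hs hsum,
    mlTransform_eq (fun h => by simp [h] at hs) hq']
  push_cast
  rw [tsum_linear_mul_geometric hq']

lemma integrableOn_exp_mul_mul_mlKernel {r : ℝ} (hα : 0 < α) (hν : 0 < ν) (hr : 1 < r)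
    (hq : |a| * (r - 1) ^ (-α) < 1) :
    IntegrableOn (fun t => Real.exp (-(r * t)) * (t * mlKernel a α ν t)) (Ioi 0) := by
  refine Integrable.mono (integrableOn_exp_mul_mlKernel hα.le hν (sub_pos.2 hr) hq)
    (ContinuousOn.aestronglyMeasurable ?_ measurableSet_Ioi) ?_
  · have := continuousOn_mlKernel a hα hν
    fun_prop
  · filter_upwards [ae_restrict_mem measurableSet_Ioi] with t (ht : 0 < t)
    have hexp : Real.exp (-((r - 1) * t)) = Real.exp (-(r * t)) * Real.exp t := by
      rw [← Real.exp_add]; ring_nf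
    simp only [hexp, norm_mul, mul_assoc]
    gcongr
    rw [Real.norm_of_nonneg ht.le, Real.norm_of_nonneg (Real.exp_pos t).le]
    linarith [Real.add_one_le_exp t]

lemma exists_abs_mul_mlKernel_le (ha : 0 < a) (hα : 0 < α) (hα2 : α < 2) (hν : 0 < ν)
    (hνα : ν ≤ α) : ∃ C, ∀ t > 0, |t * mlKernel a α ν t| ≤ C := by
  obtain ⟨G, hG, hG0, hbound⟩ := exists_integrable_norm_mlTransform_le ha hα hα2 hν hνα
  have hlarge := eventually_abs_mul_rpow_neg_lt_one a hα
  obtain ⟨x, hx, hqx, hqx'⟩ := ((eventually_gt_atTop 1).and (hlarge.and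
    ((tendsto_atTop_add_const_right atTop (-1 : ℝ) tendsto_id).eventually hlarge))).exists
  have hx0 : 0 < x := one_pos.trans hx
  have hlap : ∀ y : ℝ, laplace (fun t => t * mlKernel a α ν t) (x + y * Complex.I)
      = mlTransform a α ν (x + y * Complex.I) := fun y =>
    laplace_mul_mlKernel hα.le hν (by simpa) (by simpa)
  have hbound' : ∀ x : ℝ, 0 < x → ∀ y : ℝ, y ≠ 0 →
      ‖mlTransform a α ν (x + y * Complex.I)‖ ≤ G y := fun x hx y hy => by
    simpa using hbound (x + y * Complex.I) (by simpa) (by simpa)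
  have hdiff := differentiableOn_mlTransform (ν := ν) ha hα hα2
  refine ⟨1 / (2 * Real.pi) * ∫ y, G y, fun t ht => ?_⟩
  have hinv := ofReal_eq_integral_cexp_mul_laplace (K := fun t => t * mlKernel a α ν t) ht
    (continuousAt_id.mul ((continuousOn_mlKernel a hα hν).continuousAt (Ioi_mem_nhds ht)))
    (integrableOn_exp_mul_mul_mlKernel hα hν hx hqx') (by
      simp only [hlap]
      exact integrable_vertical (x₁ := x) (x₂ := x)
        (hdiff.mono fun s hs => by simp_all) left_mem_uIcc hG (hbound' x hx0))
  rw [← Real.norm_eq_abs, ← Complex.norm_real, hinv, norm_smul,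
    Real.norm_of_nonneg (by positivity)]
  simp only [hlap]
  gcongr
  exact norm_integral_cexp_mul_vertical_le ht.le hx0 hdiff hG hG0 hbound'

end MittagLefflerDecay

/-! ### The integrated equation -/

section CaputoDerivative

variable {α T t : ℝ} {g v w : ℝ → ℝ}

lemma tendsto_inv_mul_causalConv_powerKernel {κ : ℝ} (hκ : 0 < κ)
    (hv : v =O[𝓝[>] 0] fun s => s) :
    Tendsto (fun t => t⁻¹ * causalConv (powerKernel κ) v t) (𝓝[>] 0) (𝓝 0) := by
  obtain ⟨C, hC, hle⟩ := hv.exists_pos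
  obtain ⟨ε, hε, hεle⟩ := mem_nhdsGT_iff_exists_Ioo_subset.1 hle.bound
  have hlim : Tendsto (fun t => C * powerKernel (1 + κ) t) (𝓝[>] 0) (𝓝 0) := by
    have hcont := (continuous_powerKernel (show 1 ≤ 1 + κ by linarith)).tendsto 0
    simpa [powerKernel, hκ.ne'] using (hcont.mono_left nhdsWithin_le_nhds).const_mul C
  refine squeeze_zero_norm' ?_ hlim
  filter_upwards [Ioo_mem_nhdsGT hε] with t ht
  have hvt : ∀ s ∈ Ioo 0 t, |v s| ≤ C * t := fun s hs =>
    calc |v s| ≤ C * |s| := hεle ⟨hs.1, hs.2.trans ht.2⟩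
      _ ≤ C * t := by rw [abs_of_pos hs.1]; gcongr; exact hs.2.le
  have hint : ∫ s in (0 : ℝ)..t, |powerKernel κ s| = powerKernel (1 + κ) t := by
    rw [← causalConv_powerKernel_powerKernel one_pos hκ ht.1, causalConv_powerKernel_one]
    refine intervalIntegral.integral_congr fun s hs => ?_
    rw [uIcc_of_le ht.1.le] at hs
    exact abs_of_nonneg (powerKernel_nonneg hκ hs.1)
  have hconv := abs_causalConv_le (intervalIntegrable_powerKernel hκ t) ht.1.le hvt
  rwa [norm_mul, norm_inv, Real.norm_of_nonneg ht.1.le, Real.norm_eq_abs, inv_mul_le_iff₀ ht.1,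
    ← mul_assoc, mul_comm t, ← hint]

lemma eq_causalConv_deriv_deriv_of_AC2On (hg : AC2On g T) (h0 : g 0 = 0) (h1 : deriv g 0 = 0)
    (ht : t ∈ Ioc 0 T) : g t = causalConv (powerKernel 2) (deriv (deriv g)) t := by
  obtain ⟨hdiff, hint, hprim⟩ := hg
  have hderiv : EqOn (deriv g) (causalConv (powerKernel 1) (deriv (deriv g))) (Icc 0 T) :=
    fun s hs => by rw [hprim s hs, h1, zero_add, causalConv_powerKernel_one]
  have hsub : uIcc 0 t ⊆ uIcc 0 T :=
    uIcc_subset_uIcc left_mem_uIcc (Icc_subset_uIcc (Ioc_subset_Icc_self ht))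
  have hmem : ∀ {s}, s ∈ uIcc 0 t → s ∈ Icc 0 T := fun hs =>
    uIcc_of_le (ht.1.le.trans ht.2) ▸ hsub hs
  have hint' : IntervalIntegrable (deriv g) volume 0 t :=
    (intervalIntegrable_causalConv ht.1.le (intervalIntegrable_powerKernel one_pos t)
      (hint.mono_set hsub)).congr fun s hs => (hderiv (hmem (uIoc_subset_uIcc hs))).symm
  calc g t = ∫ s in (0 : ℝ)..t, deriv g s := by
        rw [intervalIntegral.integral_eq_sub_of_hasDerivAt
          (fun s hs => (hdiff s (hmem hs)).hasDerivAt) hint', h0, sub_zero]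
    _ = causalConv (powerKernel 1) (causalConv (powerKernel 1) (deriv (deriv g))) t := by
        rw [causalConv_powerKernel_one]
        exact intervalIntegral.integral_congr fun s hs => hderiv (hmem hs)
    _ = causalConv (powerKernel 2) (deriv (deriv g)) t := by
        rw [causalConv_powerKernel_causalConv one_pos one_pos (by norm_num) ht.1
          (hint.mono_set hsub), one_add_one_eq_two]

/-- The remainder of the first-order Taylor expansion of `w` at `0`, whose fractional integral
`capKernel α w` defines the Caputo derivative. -/
noncomputable def taylorRemainder (w : ℝ → ℝ) (s : ℝ) : ℝ := w s - deriv w 0 * s - w 0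

lemma continuous_taylorRemainder (hw : Continuous w) : Continuous (taylorRemainder w) := by
  unfold taylorRemainder
  fun_prop

lemma taylorRemainder_isBigO (hw : DifferentiableAt ℝ w 0) :
    taylorRemainder w =O[𝓝 0] fun s => s := by
  have hdiff : DifferentiableAt ℝ (taylorRemainder w) 0 := by
    unfold taylorRemainder
    fun_prop
  have h0 : taylorRemainder w 0 = 0 := by simp [taylorRemainder]
  simpa only [h0, sub_zero] using hdiff.isBigO_sub

lemma capKernel_eq_causalConv (hα : α ≠ 2) (t : ℝ) :
    capKernel α w t = causalConv (powerKernel (2 - α)) (taylorRemainder w) t := by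
  rw [capKernel, if_neg hα, rlInt_eq_causalConv]
  rfl

lemma deriv_capKernel_zero (hα : α < 2) (hw : DifferentiableAt ℝ w 0)
    (hcap : DifferentiableAt ℝ (capKernel α w) 0) : deriv (capKernel α w) 0 = 0 := by
  have hslope := (hasDerivAt_iff_tendsto_slope_zero.1 hcap.hasDerivAt).mono_left
    (nhdsGT_le_nhdsNE 0)
  refine tendsto_nhds_unique hslope ?_
  simpa [capKernel_eq_causalConv hα.ne, causalConv] using
    tendsto_inv_mul_causalConv_powerKernel (sub_pos.2 hα)
      ((taylorRemainder_isBigO hw).mono nhdsWithin_le_nhds)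

lemma capKernel_eq_causalConv_caputoD (hα : α < 2) (hw : DifferentiableAt ℝ w 0)
    (hAC : AC2On (capKernel α w) T) (ht : t ∈ Ioc 0 T) :
    capKernel α w t = causalConv (powerKernel 2) (caputoD α w) t := by
  refine eq_causalConv_deriv_deriv_of_AC2On hAC ?_ ?_ ht
  · simp [capKernel_eq_causalConv hα.ne, causalConv]
  · exact deriv_capKernel_zero hα hw (hAC.1 0 ⟨le_rfl, ht.1.le.trans ht.2⟩)

lemma ae_eq_of_intervalIntegral_eq {u v : ℝ → ℝ} (hu : IntervalIntegrable u volume 0 T)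
    (hv : IntervalIntegrable v volume 0 T)
    (h : ∀ t ∈ Ioo 0 T, ∫ s in (0 : ℝ)..t, u s = ∫ s in (0 : ℝ)..t, v s) :
    ∀ᵐ t, t ∈ Ioo 0 T → u t = v t := by
  filter_upwards [hu.ae_hasDerivAt_integral, hv.ae_hasDerivAt_integral] with t hut hvt ht
  have hmem : t ∈ uIcc 0 T := Icc_subset_uIcc (Ioo_subset_Icc_self ht)
  refine (hut hmem 0 left_mem_uIcc).unique ((hvt hmem 0 left_mem_uIcc).congr_of_eventuallyEq ?_)
  filter_upwards [Ioo_mem_nhds ht.1 ht.2] with x hx using h x hx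

/-- Convolution with `k_{α-1}` turns `k_{2-α} * v = k_2 * h` into equality of the primitives
`k_1 * v = k_1 * (k_α * h)`. -/
lemma ae_taylorRemainder_eq (hα1 : 1 < α) (hα2 : α < 2) (hw : Continuous w)
    (hw0 : DifferentiableAt ℝ w 0) (hT : 0 ≤ T) (hAC : AC2On (capKernel α w) T) :
    ∀ᵐ t, t ∈ Ioo 0 T →
      taylorRemainder w t = causalConv (powerKernel α) (caputoD α w) t := by
  have hα : 0 < α := zero_lt_one.trans hα1
  have hv := continuous_taylorRemainder hw
  have hh : IntervalIntegrable (caputoD α w) volume 0 T := hAC.2.1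
  refine ae_eq_of_intervalIntegral_eq (hv.intervalIntegrable 0 T)
    (intervalIntegrable_causalConv hT (intervalIntegrable_powerKernel hα T) hh) fun t ht => ?_
  have hht : IntervalIntegrable (caputoD α w) volume 0 t := hh.mono_set
    (uIcc_subset_uIcc left_mem_uIcc (Icc_subset_uIcc (Ioo_subset_Icc_self ht)))
  have hcap : ∀ s ∈ Ioo 0 t, causalConv (powerKernel (2 - α)) (taylorRemainder w) s
      = causalConv (powerKernel 2) (caputoD α w) s := fun s hs => by
    rw [← capKernel_eq_causalConv hα2.ne,
      capKernel_eq_causalConv_caputoD hα2 hw0 hAC ⟨hs.1, (hs.2.trans ht.2).le⟩]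
  calc ∫ s in (0 : ℝ)..t, taylorRemainder w s
      = causalConv (powerKernel (α - 1))
          (causalConv (powerKernel (2 - α)) (taylorRemainder w)) t := by
        rw [causalConv_powerKernel_causalConv (by linarith) (by linarith) (by linarith) ht.1
          (hv.intervalIntegrable 0 t), show α - 1 + (2 - α) = 1 by ring,
          causalConv_powerKernel_one]
    _ = causalConv (powerKernel (1 + α)) (caputoD α w) t := by
        rw [causalConv_congr_right ht.1.le (.of_forall hcap),
          causalConv_powerKernel_causalConv (by linarith) two_pos (by linarith) ht.1 hht]
        ring_nf
    _ = ∫ s in (0 : ℝ)..t, causalConv (powerKernel α) (caputoD α w) s := by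
        rw [← causalConv_powerKernel_causalConv one_pos hα (by linarith) ht.1 hht,
          causalConv_powerKernel_one]

lemma ae_add_causalConv_eq {a γ : ℝ} {f : ℝ → ℝ} (hγ : 0 < γ) (hα1 : 1 < α) (hα2 : α < 2)
    (hf : IntervalIntegrable f volume 0 T) (hw : Continuous w) (hw0 : DifferentiableAt ℝ w 0)
    (hT : 0 ≤ T) (hAC : AC2On (capKernel α w) T)
    (heq : ∀ᵐ t, t ∈ Ioo 0 T → caputoD α w t + a * w t = rlInt γ f t) :
    ∀ᵐ t, t ∈ Ioo 0 T → w t + a * causalConv (powerKernel α) w t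
      = w 0 * powerKernel 1 t + deriv w 0 * powerKernel 2 t
        + causalConv (powerKernel (α + γ)) f t := by
  have hα : 0 < α := zero_lt_one.trans hα1
  filter_upwards [ae_taylorRemainder_eq hα1 hα2 hw hw0 hT hAC] with t hrem ht
  have hft : IntervalIntegrable f volume 0 t := hf.mono_set
    (uIcc_subset_uIcc left_mem_uIcc (Icc_subset_uIcc (Ioo_subset_Icc_self ht)))
  have hexists : ∀ {B : ℝ → ℝ}, IntervalIntegrable B volume 0 t →
      CausalConvExists (powerKernel α) B t := fun hB =>
    (causalConvExists_of_continuousOn hB (continuous_powerKernel hα1.le).continuousOn).symm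
  have hcaputo : ∀ᵐ s, s ∈ Ioo 0 t →
      caputoD α w s = causalConv (powerKernel γ) f s - a * w s := by
    filter_upwards [heq] with s hs hst
    rw [← rlInt_eq_causalConv, ← hs ⟨hst.1, hst.2.trans ht.2⟩, add_sub_cancel_right]
  have hconv : causalConv (powerKernel α) (caputoD α w) t
      = causalConv (powerKernel (α + γ)) f t - a * causalConv (powerKernel α) w t := by
    rw [causalConv_congr_right ht.1.le hcaputo, causalConv_sub_right
      (hexists (intervalIntegrable_causalConv ht.1.le (intervalIntegrable_powerKernel hγ t) hft))
      ((hexists (hw.intervalIntegrable 0 t)).const_mul a), causalConv_const_mul_right,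
      causalConv_powerKernel_causalConv hα hγ (by linarith) ht.1 hft]
  have := hrem ht
  rw [hconv, taylorRemainder] at this
  rw [powerKernel_one, powerKernel_two]
  linarith

end CaputoDerivative

section Resolvent

variable {a α β ν t : ℝ} {u g C : ℝ → ℝ}

lemma causalConv_mlKernel_causalConv_powerKernel {q : ℝ} (a : ℝ) (hα : 0 < α) (hν : 0 < ν)
    (hq : 1 ≤ q) (ht : 0 < t) (hC : IntervalIntegrable C volume 0 t) :
    causalConv (mlKernel a α ν) (causalConv (powerKernel q) C) t
      = causalConv (mlKernel a α (ν + q)) C t := by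
  have hq0 : 0 < q := zero_lt_one.trans_le hq
  have he := intervalIntegrable_mlKernel a hα hν ht.le
  rw [causalConv_assoc (M := powerKernel q t * ∫ s in (0 : ℝ)..t, |mlKernel a α ν s|) ht he
    (intervalIntegrable_powerKernel hq0 t) hC]
  · exact causalConv_congr_left ht.le fun s hs => causalConv_mlKernel_powerKernel a hα hν hq0 hs.1
  · intro s hs
    rw [causalConv_comm, causalConv_congr_left hs.1.le fun r hr =>
      abs_of_nonneg (powerKernel_nonneg hq0 hr.1.le)]
    simpa only [abs_abs] using (le_abs_self _).trans (abs_causalConv_powerKernel_le hq he.abs hs)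

/-- The Mittag-Leffler kernels resolve the Volterra equation `u + a k_α * u = g`, because
`k_β = e_β + a e_{β+α}` and `e_{β+α} = e_β * k_α`. -/
lemma causalConv_powerKernel_eq_of_volterra (hα : 1 ≤ α) (hβ : 0 < β) (ht : 0 < t)
    (hu : ContinuousOn u (uIcc 0 t))
    (hug : ∀ᵐ s, s ∈ Ioo 0 t → u s + a * causalConv (powerKernel α) u s = g s) :
    causalConv (powerKernel β) u t = causalConv (mlKernel a α β) g t := by
  have hα0 : 0 < α := zero_lt_one.trans_le hα
  have huI : IntervalIntegrable u volume 0 t := hu.intervalIntegrable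
  have he : ∀ {ν : ℝ}, 0 < ν → IntervalIntegrable (mlKernel a α ν) volume 0 t := fun hν =>
    intervalIntegrable_mlKernel a hα0 hν ht.le
  have hconv : CausalConvExists (mlKernel a α β) (causalConv (powerKernel α) u) t :=
    causalConvExists_of_bounded ht.le (he hβ)
      (intervalIntegrable_causalConv ht.le (intervalIntegrable_powerKernel hα0 t) huI)
      fun s hs => abs_causalConv_powerKernel_le hα huI hs
  have hkernel : EqOn (powerKernel β) (fun s => mlKernel a α β s + a * mlKernel a α (β + α) s)
      (Ioo 0 t) := fun s hs => by
    dsimp only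
    rw [mlKernel_eq_powerKernel_sub a β hα0 hs.1.le, sub_add_cancel]
  rw [causalConv_congr_left ht.le hkernel, causalConv_comm, causalConv_add_right
    (causalConvExists_of_continuousOn (he hβ) hu).symm
    ((causalConvExists_of_continuousOn (he (add_pos hβ hα0)) hu).symm.const_mul a),
    causalConv_const_mul_right, causalConv_comm u, causalConv_comm u,
    ← causalConv_mlKernel_causalConv_powerKernel a hα0 hβ hα ht huI,
    ← causalConv_const_mul_right, ← causalConv_add_right
    (causalConvExists_of_continuousOn (he hβ) hu) (hconv.const_mul a)]
  exact causalConv_congr_right ht.le hug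

lemma rlInt_eq_add_causalConv_mlKernel {γ : ℝ} {f w : ℝ → ℝ} (hγ : 0 < γ) (hα1 : 1 < α)
    (hα2 : α < 2) (hβ : 0 < β) (ht : 0 < t) (hf : IntervalIntegrable f volume 0 t)
    (hw : Continuous w) (hw0 : DifferentiableAt ℝ w 0) (hAC : AC2On (capKernel α w) t)
    (heq : ∀ᵐ s, s ∈ Ioo 0 t → caputoD α w s + a * w s = rlInt γ f s) :
    rlInt β w t = w 0 * mlKernel a α (β + 1) t + deriv w 0 * mlKernel a α (β + 2) t
      + causalConv (mlKernel a α (α + (γ + β))) f t := by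
  have hα : 0 < α := zero_lt_one.trans hα1
  have hαγ : 1 ≤ α + γ := by linarith
  have he := intervalIntegrable_mlKernel a hα hβ ht.le
  have hpow : ∀ {q : ℝ}, 1 ≤ q → CausalConvExists (mlKernel a α β) (powerKernel q) t := fun hq =>
    causalConvExists_of_continuousOn he (continuous_powerKernel hq).continuousOn
  have hconv : CausalConvExists (mlKernel a α β) (causalConv (powerKernel (α + γ)) f) t :=
    causalConvExists_of_bounded ht.le he
      (intervalIntegrable_causalConv ht.le (intervalIntegrable_powerKernel (by linarith) t) hf)
      fun s hs => abs_causalConv_powerKernel_le hαγ hf hs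
  have h1 := (hpow le_rfl).const_mul (w 0)
  have h2 := (hpow one_le_two).const_mul (deriv w 0)
  rw [rlInt_eq_causalConv, causalConv_powerKernel_eq_of_volterra hα1.le hβ ht hw.continuousOn
      (ae_add_causalConv_eq hγ hα1 hα2 hf hw hw0 ht.le hAC heq),
    causalConv_add_right (h1.add h2) hconv, causalConv_add_right h1 h2,
    causalConv_const_mul_right, causalConv_const_mul_right,
    causalConv_mlKernel_powerKernel a hα hβ one_pos ht,
    causalConv_mlKernel_powerKernel a hα hβ two_pos ht,
    causalConv_mlKernel_causalConv_powerKernel a hα hβ hαγ ht hf]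
  ring_nf

end Resolvent

/-! ### Behaviour at infinity -/

section Asymptotics

variable {a α δ ν : ℝ}

lemma rpow_mul_powerKernel {t : ℝ} (ht : 0 < t) :
    t ^ (1 - δ) * powerKernel ν t = t ^ (ν - δ) / Real.Gamma ν := by
  rw [powerKernel, ← mul_div_assoc, ← Real.rpow_add ht]
  ring_nf

lemma tendsto_rpow_mul_mlKernel_of_le (ha : 0 < a) (hα : 0 < α) (hα2 : α < 2) (hδ : 0 < δ)
    (hν : 0 < ν) (hνα : ν ≤ α) :
    Tendsto (fun t => t ^ (1 - δ) * mlKernel a α ν t) atTop (𝓝 0) := by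
  obtain ⟨C, hC⟩ := exists_abs_mul_mlKernel_le ha hα hα2 hν hνα
  have hlim : Tendsto (fun t : ℝ => C * t ^ (-δ)) atTop (𝓝 0) := by
    simpa using (tendsto_rpow_neg_atTop hδ).const_mul C
  refine squeeze_zero_norm' ?_ hlim
  filter_upwards [eventually_gt_atTop 0] with t ht
  have hpow := Real.rpow_pos_of_pos ht (-δ)
  calc ‖t ^ (1 - δ) * mlKernel a α ν t‖ = |t * mlKernel a α ν t| * t ^ (-δ) := by
        rw [sub_eq_add_neg, Real.rpow_add ht, Real.rpow_one, mul_right_comm, norm_mul,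
          Real.norm_eq_abs, Real.norm_of_nonneg hpow.le]
    _ ≤ C * t ^ (-δ) := by gcongr; exact hC t ht

lemma tendsto_rpow_mul_mlKernel (ha : 0 < a) (hα : 0 < α) (hα2 : α < 2) (hδ : 0 < δ)
    (hδα : δ ≤ α) (hν : 0 < ν) (hνα : ν < α + δ) :
    Tendsto (fun t => t ^ (1 - δ) * mlKernel a α ν t) atTop (𝓝 0) := by
  rcases le_or_gt ν α with h | h
  · exact tendsto_rpow_mul_mlKernel_of_le ha hα hα2 hδ hν h
  have hμ : 0 < ν - α := sub_pos.2 h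
  have hml := tendsto_rpow_mul_mlKernel_of_le ha hα hα2 hδ hμ (by linarith)
  have hpow : Tendsto (fun t : ℝ => t ^ (ν - α - δ) / Real.Gamma (ν - α)) atTop (𝓝 0) := by
    simpa [sub_sub] using (tendsto_rpow_neg_atTop (show 0 < α + δ - ν by linarith)).div_const
      (Real.Gamma (ν - α))
  have hlim := (hpow.sub hml).div_const a
  rw [sub_zero, zero_div] at hlim
  refine hlim.congr' ?_
  filter_upwards [eventually_gt_atTop 0] with t ht
  have hrec := mlKernel_eq_powerKernel_sub a (ν - α) hα ht.le
  rw [sub_add_cancel] at hrec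
  rw [← rpow_mul_powerKernel ht, ← mul_sub, div_eq_iff ha.ne', hrec]
  ring

lemma tendsto_rpow_mul_mlKernel_add (ha : 0 < a) (hα : 0 < α) (hα2 : α < 2) (hδ : 0 < δ)
    (hδα : δ ≤ α) :
    Tendsto (fun t => t ^ (1 - δ) * mlKernel a α (α + δ) t) atTop
      (𝓝 ((Real.Gamma δ)⁻¹ / a)) := by
  have hml := tendsto_rpow_mul_mlKernel_of_le ha hα hα2 hδ hδ hδα
  have hlim := (hml.const_sub (Real.Gamma δ)⁻¹).div_const a
  rw [sub_zero] at hlim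
  refine hlim.congr' ?_
  filter_upwards [eventually_gt_atTop 0] with t ht
  have hpow : t ^ (1 - δ) * powerKernel δ t = (Real.Gamma δ)⁻¹ := by
    rw [rpow_mul_powerKernel ht, sub_self, Real.rpow_zero, one_div]
  rw [← hpow, ← mul_sub, div_eq_iff ha.ne', mlKernel_eq_powerKernel_sub a δ hα ht.le,
    add_comm δ]
  ring

lemma exists_eventually_le_mlKernel_add (ha : 0 < a) (hα : 0 < α) (hα2 : α < 2) (hδ : 0 < δ)
    (hδα : δ ≤ α) : ∃ c > 0, ∀ᶠ t in atTop, c * t ^ (δ - 1) ≤ mlKernel a α (α + δ) t := by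
  have hL : 0 < (Real.Gamma δ)⁻¹ / a := div_pos (inv_pos.2 (Real.Gamma_pos_of_pos hδ)) ha
  refine ⟨_, half_pos hL, ?_⟩
  filter_upwards [(tendsto_rpow_mul_mlKernel_add ha hα hα2 hδ hδα).eventually_const_le
    (half_lt_self hL), eventually_gt_atTop 0] with t hle ht
  rwa [← neg_sub 1 δ, Real.rpow_neg ht.le, ← div_eq_mul_inv,
    div_le_iff₀ (Real.rpow_pos_of_pos ht _), mul_comm (mlKernel _ _ _ _)]

end Asymptotics

section Lower

variable {K f w : ℝ → ℝ} {δ T : ℝ}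

/-- Only the mass of `f` on the fixed interval `[0, T]` is kept, where `t - s ≤ t` and `δ ≤ 1` make
`K (t - s) ≥ c (t - s)^{δ-1}` at least `c t^{δ-1}`. -/
lemma eventually_le_rpow_mul_causalConv {c : ℝ} (hδ : δ ≤ 1) (hc : 0 ≤ c) (hT : 0 ≤ T)
    (hK0 : ∀ t > 0, 0 ≤ K t) (hK : ∀ᶠ t in atTop, c * t ^ (δ - 1) ≤ K t)
    (hf : IntervalIntegrable f volume 0 T) (hf0 : ∀ᵐ t ∂volume.restrict (Ici 0), 0 ≤ f t)
    (hKf : ∀ t > 0, CausalConvExists K f t) :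
    ∀ᶠ t in atTop, c * ∫ s in (0 : ℝ)..T, f s ≤ t ^ (1 - δ) * causalConv K f t := by
  obtain ⟨U, hU⟩ := eventually_atTop.1 hK
  filter_upwards [eventually_ge_atTop (T + U), eventually_gt_atTop T] with t htU htT
  have ht : 0 < t := hT.trans_lt htT
  have hmem : T ∈ uIcc 0 t := Icc_subset_uIcc ⟨hT, htT.le⟩
  have hint : IntervalIntegrable (fun s => K (t - s) * f s) volume 0 t := hKf t ht
  have hint₁ := hint.mono_set (uIcc_subset_uIcc_left hmem)
  have hint₂ := hint.mono_set (uIcc_subset_uIcc_right hmem)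
  have htail : 0 ≤ ∫ s in T..t, K (t - s) * f s := by
    rw [intervalIntegral.integral_of_le htT.le, integral_Ioc_eq_integral_Ioo]
    refine setIntegral_nonneg_of_ae_restrict ?_
    filter_upwards [ae_restrict_of_ae_restrict_of_subset
      (Ioo_subset_Ioi_self.trans (Ioi_subset_Ici hT)) hf0, ae_restrict_mem measurableSet_Ioo]
      with s hs hst using mul_nonneg (hK0 _ (sub_pos.2 hst.2)) hs
  have hhead : c * t ^ (δ - 1) * ∫ s in (0 : ℝ)..T, f s ≤ ∫ s in (0 : ℝ)..T, K (t - s) * f s := by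
    rw [← intervalIntegral.integral_const_mul]
    refine intervalIntegral.integral_mono_ae_restrict hT (hf.const_mul _) hint₁ ?_
    filter_upwards [ae_restrict_of_ae_restrict_of_subset Icc_subset_Ici_self hf0,
      ae_restrict_mem measurableSet_Icc] with s hs hst
    have hpow : t ^ (δ - 1) ≤ (t - s) ^ (δ - 1) :=
      Real.rpow_le_rpow_of_nonpos (by linarith [hst.2]) (by linarith [hst.1]) (by linarith)
    refine mul_le_mul_of_nonneg_right ?_ hs
    calc c * t ^ (δ - 1) ≤ c * (t - s) ^ (δ - 1) := by gcongr
      _ ≤ K (t - s) := hU _ (by linarith [hst.2])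
  calc c * ∫ s in (0 : ℝ)..T, f s
      = t ^ (1 - δ) * (c * t ^ (δ - 1) * ∫ s in (0 : ℝ)..T, f s) := by
        rw [← mul_assoc, mul_left_comm, ← Real.rpow_add ht, sub_add_sub_cancel', sub_self,
          Real.rpow_zero, mul_one]
    _ ≤ t ^ (1 - δ) * causalConv K f t := by
        rw [causalConv, ← intervalIntegral.integral_add_adjacent_intervals hint₁ hint₂]
        gcongr
        linarith

lemma exists_intervalIntegral_pos {g : ℝ → ℝ} (hf : ∀ T > 0, IntervalIntegrable f volume 0 T)
    (hg : Continuous g) (hg0 : ∀ t, 0 ≤ g t) (hgne : ∃ t, 0 ≤ t ∧ g t ≠ 0)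
    (hgf : ∀ᵐ t ∂volume.restrict (Ici 0), g t ≤ f t) : ∃ T > 0, 0 < ∫ t in (0 : ℝ)..T, f t := by
  obtain ⟨t₀, ht₀, hne⟩ := hgne
  have hT : 0 < t₀ + 1 := by linarith
  refine ⟨t₀ + 1, hT, ?_⟩
  calc 0 < ∫ t in (0 : ℝ)..t₀ + 1, g t :=
        intervalIntegral.integral_pos hT hg.continuousOn (fun t _ => hg0 t)
          ⟨t₀, ⟨ht₀, by linarith⟩, (hg0 t₀).lt_of_ne' hne⟩
    _ ≤ ∫ t in (0 : ℝ)..t₀ + 1, f t :=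
        intervalIntegral.integral_mono_ae_restrict hT.le (hg.intervalIntegrable _ _)
          (hf _ hT) (ae_restrict_of_ae_restrict_of_subset Icc_subset_Ici_self hgf)

lemma exists_intervalIntegral_pos_of_mul_abs_rpow_le {b p : ℝ} (hb : 0 < b) (hp : 0 ≤ p)
    (hf : ∀ T > 0, IntervalIntegrable f volume 0 T) (hw : Continuous w)
    (hne : ∃ t, 0 ≤ t ∧ w t ≠ 0)
    (hwf : ∀ᵐ t ∂volume.restrict (Ici 0), b * |w t| ^ p ≤ f t) :
    ∃ T > 0, 0 < ∫ t in (0 : ℝ)..T, f t :=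
  exists_intervalIntegral_pos hf (by fun_prop (disch := exact fun _ => .inr hp))
    (fun t => by positivity) (hne.imp fun t ht => ⟨ht.1, by have := ht.2; positivity⟩) hwf

end Lower

section Solutions

variable {a α β γ t : ℝ} {f w : ℝ → ℝ}

lemma causalConvExists_mlKernel (a : ℝ) {ν : ℝ} (hα : 0 < α) (hν : 1 ≤ ν) (ht : 0 ≤ t)
    (hf : IntervalIntegrable f volume 0 t) : CausalConvExists (mlKernel a α ν) f t := by
  have hν0 : 0 < ν := zero_lt_one.trans_le hν
  obtain ⟨M, hM⟩ := exists_abs_mlKernel_le a hα hν0 ht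
  refine (causalConvExists_of_bounded (M := |M| * powerKernel ν t) ht hf
    (intervalIntegrable_mlKernel a hα hν0 ht) fun s hs => ?_).symm
  have hk := powerKernel_nonneg hν0 hs.1.le
  calc |mlKernel a α ν s| ≤ M * powerKernel ν s := hM s ⟨hs.1, hs.2.le⟩
    _ ≤ |M| * powerKernel ν t := by
        gcongr
        exacts [le_abs_self M, powerKernel_le_powerKernel hν hs.1.le hs.2.le]

lemma tendsto_rpow_mul_initial_terms (ha : 0 < a) (hα : 1 < α) (hα2 : α < 2) (hγ : 0 < γ)
    (hβ : 0 < β) (hγβ : γ + β < 1) {w₁ : ℝ} (hw₁ : 2 < α + γ ∨ w₁ = 0) (w₀ : ℝ) :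
    Tendsto (fun t => t ^ (1 - (γ + β)) *
      (w₀ * mlKernel a α (β + 1) t + w₁ * mlKernel a α (β + 2) t)) atTop (𝓝 0) := by
  have hα0 : 0 < α := zero_lt_one.trans hα
  have hdecay : ∀ {ν : ℝ}, 0 < ν → ν < α + (γ + β) →
      Tendsto (fun t => t ^ (1 - (γ + β)) * mlKernel a α ν t) atTop (𝓝 0) := fun hν hνα =>
    tendsto_rpow_mul_mlKernel ha hα0 hα2 (by linarith) (by linarith) hν hνα
  have h₀ := (hdecay (show 0 < β + 1 by linarith) (by linarith)).const_mul w₀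
  have h₁ : Tendsto (fun t => w₁ * (t ^ (1 - (γ + β)) * mlKernel a α (β + 2) t)) atTop
      (𝓝 0) := by
    rcases hw₁ with h | rfl
    · simpa using (hdecay (show 0 < β + 2 by linarith) (by linarith)).const_mul w₁
    · simp
  have hsum := h₀.add h₁
  rw [mul_zero, add_zero] at hsum
  exact hsum.congr fun t => by ring

end Solutions

end FractionalODE

open FractionalODE

theorem liminf_pos_vi_general {γ α a β : ℝ} {f w : ℝ → ℝ} (hγ : 0 < γ) (hα1 : 1 < α) (hα2 : α < 2)
    (ha : 0 < a) (hβ : 0 < β) (hαγβ : α / 2 ≤ γ + β) (hγβ : γ + β < 1)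
    (hf : ∀ T > (0 : ℝ), IntervalIntegrable f volume 0 T)
    (hw : Continuous w) (hw0 : DifferentiableAt ℝ w 0)
    (hAC : ∀ T > (0 : ℝ), AC2On (capKernel α w) T)
    (heq : ∀ᵐ t ∂volume.restrict (Set.Ici (0 : ℝ)), caputoD α w t + a * w t = rlInt γ f t)
    (hf0 : ∀ᵐ t ∂volume.restrict (Set.Ici (0 : ℝ)), 0 ≤ f t)
    (hfpos : ∃ T > 0, 0 < ∫ t in (0 : ℝ)..T, f t) (hw1 : 2 < α + γ ∨ deriv w 0 = 0) :
    0 < liminf (fun t : ℝ => ((t ^ (1 - γ - β) * rlInt β w t : ℝ) : EReal)) atTop := by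
  have hα : 0 < α := zero_lt_one.trans hα1
  have hode := (ae_restrict_iff' measurableSet_Ici).1 heq
  obtain ⟨T, hT, hmass⟩ := hfpos
  obtain ⟨c, hc, hkernel⟩ := exists_eventually_le_mlKernel_add ha hα hα2 (δ := γ + β)
    (by linarith) (by linarith)
  have hsource := eventually_le_rpow_mul_causalConv hγβ.le hc.le hT.le
    (fun t ht => mlKernel_nonneg ha hα hα2 hαγβ ht) hkernel (hf T hT)
    hf0 fun t ht => causalConvExists_mlKernel a hα (by linarith) ht.le (hf t ht)
  have hC : 0 < c * ∫ t in (0 : ℝ)..T, f t := mul_pos hc hmass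
  have hinit := (tendsto_rpow_mul_initial_terms ha hα1 hα2 hγ hβ hγβ hw1 (w 0)).eventually_const_le
    (neg_neg_of_pos (half_pos hC))
  refine (EReal.coe_pos.2 (half_pos hC)).trans_le (le_liminf_of_le (by isBoundedDefault) ?_)
  filter_upwards [hsource, hinit, eventually_gt_atTop 0] with t hs hi ht
  rw [EReal.coe_le_coe_iff, rlInt_eq_add_causalConv_mlKernel hγ hα1 hα2 hβ ht (hf t ht) hw hw0
    (hAC t ht) (hode.mono fun s hs hst => hs hst.1.le), sub_sub]
  linarith

/-- Lemma 2.3 (vi): for 0 < γ < α/2 and β with α/2 ≤ γ+β < 1, 0 < β < α, if α+γ > 2 or (α+γ ≤ 2 and w'(0)=0), then liminf t^{1−γ−β} (₀I_t^β w)(t) > 0. -/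
theorem liminf_pos_vi
    (γ α p a b : ℝ) (f w : ℝ → ℝ)
    (hγ : 0 < γ) (hα1 : 1 < α) (hα2 : α < 2) (hp : 1 < p) (ha : 0 < a) (hb : 0 < b)
    (hf : ∀ T > (0:ℝ), IntervalIntegrable f volume 0 T)
    (hw : ContDiff ℝ 1 w)
    (hw0 : ∃ t : ℝ, 0 ≤ t ∧ w t ≠ 0)
    (hAC : ∀ T > (0:ℝ), AC2On (capKernel α w) T)
    (heq : ∀ᵐ t ∂(volume.restrict (Set.Ici (0:ℝ))),
      caputoD α w t + a * w t = rlInt γ f t ∧ f t ≥ b * |w t| ^ p)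
    (hγα : γ < α / 2) :
    ∀ β : ℝ, α / 2 ≤ γ + β → γ + β < 1 → 0 < β → β < α →
      (2 < α + γ ∨ (α + γ ≤ 2 ∧ deriv w 0 = 0)) →
      0 < liminf (fun t : ℝ => ((t ^ (1 - γ - β) * rlInt β w t : ℝ) : EReal)) atTop := by
  intro β hαγβ hγβ hβ _ hcase
  exact liminf_pos_vi_general hγ hα1 hα2 ha hβ hαγβ hγβ hf hw.continuous
    (hw.differentiable one_ne_zero 0) hAC (heq.mono fun t ht => ht.1)
    (heq.mono fun t ht => le_trans (by positivity) ht.2)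
    (exists_intervalIntegral_pos_of_mul_abs_rpow_le hb (by linarith) hf hw.continuous hw0
      (heq.mono fun t ht => ht.2)) (hcase.imp_right And.right)
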